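/- Let β ∈ (1,2) be a multinacci number and let [t_L, t_R) be a nonempty β-Lyndon interval contained in [0, 1 − 1/β). Then [t_L, t_R] is a maximal interval on which the dimension function η_β(t) = dim_H K_β(t) is constant: η_β is constant on [t_L, t_R], and η_β is not constant on any interval properly containing [t_L, t_R]. -/

import Mathlib

open Set Filter MeasureTheory

/-- The β-transformation `x ↦ βx (mod 1)`. -/
noncomputable def Tbeta (β x : ℝ) : ℝ := Int.fract (β * x)

/-- The survivor set `K_β(t) = {x ∈ [0,1) : T_β^n x ≥ t for all n ≥ 0}`. -/
def Kset (β t : ℝ) : Set ℝ := {x | x ∈ Set.Ico (0 : ℝ) 1 ∧ ∀ n : ℕ, t ≤ (Tbeta β)^[n] x}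

/-- Strict lexicographic order on sequences of naturals. -/
def seqLt (x y : ℕ → ℕ) : Prop := ∃ n, (∀ i, i < n → x i = y i) ∧ x n < y n

/-- Lexicographic order on sequences of naturals. -/
def seqLe (x y : ℕ → ℕ) : Prop := x = y ∨ seqLt x y

/-- The `n`-th iterate of the left shift. -/
def shiftN (n : ℕ) (x : ℕ → ℕ) : ℕ → ℕ := fun i => x (i + n)

/-- The sequence `w 0^∞`. -/
def wordSeq (w : List ℕ) : ℕ → ℕ := fun i => w.getD i 0

/-- The periodic sequence `w^∞`. -/
def perSeq (w : List ℕ) : ℕ → ℕ := fun i => w.getD (i % w.length) 0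

/-- The sequence obtained by concatenating the word `w` with the sequence `x`. -/
def catSeq (w : List ℕ) (x : ℕ → ℕ) : ℕ → ℕ :=
  fun i => if i < w.length then w.getD i 0 else x (i - w.length)

/-- The greedy β-expansion of `t`: the digit `b_{i+1}` is `⌊β T_β^i t⌋`. -/
noncomputable def greedy (β t : ℝ) : ℕ → ℕ := fun i => (⌊β * (Tbeta β)^[i] t⌋).toNat

/-- `d` is the quasi-greedy β-expansion of `1`: the lexicographically largest
sequence in `{0,1}^ℕ` not ending in `0^∞` whose digits sum to `1` in base `β`. -/
def IsQuasiGreedy (β : ℝ) (d : ℕ → ℕ) : Prop :=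
  (∀ i, d i ≤ 1) ∧ (¬ ∃ N, ∀ n, N ≤ n → d n = 0) ∧
  (∑' i : ℕ, (d i : ℝ) / β ^ (i + 1) = 1) ∧
  ∀ e : ℕ → ℕ, (∀ i, e i ≤ 1) → (¬ ∃ N, ∀ n, N ≤ n → e n = 0) →
    (∑' i : ℕ, (e i : ℝ) / β ^ (i + 1) = 1) → seqLe e d

/-- `s = s_1…s_p` is a β-Lyndon word: `s_{i+1}…s_p ≻ s_1…s_{p-i}` for `1 ≤ i < p`
and `σ^n(s^∞) ≺ δ(β)` for all `n ≥ 0`. -/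
def IsBetaLyndon (β : ℝ) (s : List ℕ) : Prop :=
  s ≠ [] ∧ (∀ a ∈ s, a ≤ 1) ∧
  (∀ i, 1 ≤ i → i < s.length →
    seqLt (wordSeq (s.take (s.length - i))) (wordSeq (s.drop i))) ∧
  (∀ d : ℕ → ℕ, IsQuasiGreedy β d → ∀ n : ℕ, seqLt (shiftN n (perSeq s)) d)

/-- Left endpoint `t_L = Σ_{i=1}^p s_i β^{-i}` of the β-Lyndon interval generated by `s`. -/
noncomputable def lyndonLeft (β : ℝ) (s : List ℕ) : ℝ :=
  ∑ i ∈ Finset.range s.length, (s.getD i 0 : ℝ) / β ^ (i + 1)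

/-- Right endpoint `t_R = (β^p/(β^p - 1)) t_L` of the β-Lyndon interval generated by `s`. -/
noncomputable def lyndonRight (β : ℝ) (s : List ℕ) : ℝ :=
  β ^ s.length / (β ^ s.length - 1) * lyndonLeft β s

/-- The union of all β-Lyndon intervals `[t_L, t_R)`. -/
noncomputable def lyndonUnionIco (β : ℝ) : Set ℝ :=
  ⋃ s ∈ {s : List ℕ | IsBetaLyndon β s}, Set.Ico (lyndonLeft β s) (lyndonRight β s)

/-- The symbolic survivor set `K̃_β(t)` with upper bound sequence `d = δ(β)`. -/
def Ktilde (β t : ℝ) (d : ℕ → ℕ) : Set (ℕ → ℕ) :=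
  {x | (∀ i, x i ≤ 1) ∧ ∀ n : ℕ, seqLe (greedy β t) (shiftN n x) ∧ seqLe (shiftN n x) d}

/-- The set-valued bifurcation set `E_β`. -/
def Eset (β : ℝ) : Set ℝ :=
  {t | t ∈ Set.Ico (0 : ℝ) 1 ∧ ∀ t', t < t' → t' < 1 → Kset β t' ≠ Kset β t}

/-- The dimension bifurcation set `B_β`. -/
def Bset (β : ℝ) : Set ℝ :=
  {t | t ∈ Set.Ico (0 : ℝ) 1 ∧ ∀ t', t < t' → t' < 1 → dimH (Kset β t') ≠ dimH (Kset β t)}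

/-- `β` is a multinacci number: `β^{m+1} = β^m + ⋯ + β + 1` for some `m ≥ 1`. -/
def IsMultinacci (β : ℝ) : Prop :=
  ∃ m : ℕ, 1 ≤ m ∧ β ^ (m + 1) = ∑ i ∈ Finset.range (m + 1), β ^ i

/-!
A point of `[t_L, t_R)` has first digits `s`, so `T_β^p` keeps it below the fixed point `t_R` and
multiplies its distance to `t_R` by `β^p`, until it drops below `t_L`. Hence
`K_β(t_L) = K_β(t_R)`, and `η_β` is constant on `[t_L, t_R]`.

Outside the plateau the dimension changes because a point is lost: if `x < t'` has an orbit
staying well above `t`, a long prefix of `x` never occurs in the expansion of a point of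
`K_β(t')`. For multinacci `β`, words of points whose orbits stay well above `t` can be joined by
connectors of bounded length without going below `t`. Inserting the forbidden prefix of `x` at one
of `k` places into the `#W` words of length `q * k` of `K_β(t')` gives `k * #W` freely
concatenable words of length `q * k + c`. As `#W ≥ β ^ (q * k * dim K_β(t'))`, the factor `k`
eventually beats the constant cost `c` of the connectors, and `dim K_β(t') < dim K_β(t)`. The lost
point is `t_R` to the right of the plateau, and to its left the point obtained from `s` by
lowering its last digit to `0` and continuing close to `1`.
-/

section DimensionBounds

theorem exists_coding {ι E : Type*} [MetricSpace E] {f : ι → E → E} {c : NNReal} (hc : c < 1)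
    (hf : ∀ i, LipschitzWith c (f i)) {s : Set E} (hs : IsComplete s)
    (hbdd : Bornology.IsBounded s) (hne : s.Nonempty) (hmaps : ∀ i, MapsTo (f i) s s) :
    ∃ g : (ℕ → ι) → E, ∀ ω, g ω ∈ s ∧ g ω = f (ω 0) (g fun k => ω (k + 1)) := by
  obtain ⟨x₀, hx₀⟩ := hne
  let F : ℕ → (ℕ → ι) → E :=
    fun n => n.rec (fun _ => x₀) fun _ G ω => f (ω 0) (G fun k => ω (k + 1))
  have hmem : ∀ n ω, F n ω ∈ s := fun n => by
    induction n with
    | zero => exact fun _ => hx₀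
    | succ n ih => exact fun ω => hmaps _ (ih _)
  have hdist : ∀ n ω, dist (F n ω) (F (n + 1) ω) ≤ Metric.diam s * (c : ℝ) ^ n := fun n => by
    induction n with
    | zero => intro ω; simpa using Metric.dist_le_diam_of_mem hbdd (hmem 0 ω) (hmem 1 ω)
    | succ n ih =>
      intro ω
      calc dist (F (n + 1) ω) (F (n + 2) ω)
          ≤ c * dist (F n fun k => ω (k + 1)) (F (n + 1) fun k => ω (k + 1)) :=
            (hf (ω 0)).dist_le_mul _ _
        _ ≤ c * (Metric.diam s * (c : ℝ) ^ n) := by gcongr; exact ih _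
        _ = Metric.diam s * (c : ℝ) ^ (n + 1) := by ring
  have hlim : ∀ ω, ∃ y ∈ s, Tendsto (fun n => F n ω) atTop (nhds y) := fun ω =>
    cauchySeq_tendsto_of_isComplete hs (fun n => hmem n ω)
      (cauchySeq_of_le_geometric c _ (mod_cast hc) fun n => hdist n ω)
  choose g hgs hg using hlim
  refine ⟨g, fun ω => ⟨hgs ω, tendsto_nhds_unique ((hg ω).comp (tendsto_add_atTop_nat 1)) ?_⟩⟩
  exact ((hf (ω 0)).continuous.tendsto _).comp (hg _)

theorem ofReal_le_dimH_of_holderOnWith {X : Type*} [MetricSpace X] {s : Set X} {f : X → ℝ}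
    {C : NNReal} {ρ : ℝ} (hρ : 0 < ρ) (hf : HolderOnWith C ρ.toNNReal f s)
    (hsurj : Icc 0 1 ⊆ f '' s) :
    ENNReal.ofReal ρ ≤ dimH s := by
  have hIcc : dimH (Icc (0 : ℝ) 1) = 1 := by
    simpa using Real.dimH_of_mem_nhds (E := ℝ) (x := 1 / 2)
      (Icc_mem_nhds (a := (0 : ℝ)) (b := 1) (by norm_num) (by norm_num))
  have hone : (1 : ENNReal) ≤ dimH s / ENNReal.ofReal ρ :=
    hIcc ▸ (dimH_mono hsurj).trans (hf.dimH_image_le (Real.toNNReal_pos.2 hρ))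
  rwa [ENNReal.le_div_iff_mul_le (Or.inl (by simpa using hρ)) (Or.inl ENNReal.ofReal_ne_top),
    one_mul] at hone

/-- Sequences that first differ at their `q`-th symbol have images at distance `≥ δ / b ^ q`. -/
def SeparatesSequences {ι X : Type*} [MetricSpace X] (δ b : ℝ) (g : (ℕ → ι) → X) : Prop :=
  ∀ (q : ℕ) (ω ω' : ℕ → ι), (∀ i < q, ω i = ω' i) → ω q ≠ ω' q → δ / b ^ q ≤ dist (g ω) (g ω')

section Separation

variable {X : Type*} [MetricSpace X] {b δ : ℝ}

theorem SeparatesSequences.exists_le_dist {ι : Type*} {g : (ℕ → ι) → X}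
    (hg : SeparatesSequences δ b g) {ω ω' : ℕ → ι} (hne : ω ≠ ω') :
    ∃ q, (∀ i < q, ω i = ω' i) ∧ δ / b ^ q ≤ dist (g ω) (g ω') := by
  classical
  have hex := Function.ne_iff.1 hne
  have hmin : ∀ i < Nat.find hex, ω i = ω' i := fun i hi => not_not.1 (Nat.find_min hex hi)
  exact ⟨_, hmin, hg _ _ _ hmin (Nat.find_spec hex)⟩

theorem SeparatesSequences.injective {ι : Type*} {g : (ℕ → ι) → X}
    (hg : SeparatesSequences δ b g) (hb : 0 < b) (hδ : 0 < δ) : Function.Injective g :=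
  fun ω ω' h => by
    by_contra hne
    obtain ⟨q, -, hq⟩ := hg.exists_le_dist hne
    exact (div_pos hδ (pow_pos hb q)).not_ge (hq.trans (dist_eq_zero.2 h).le)

theorem SeparatesSequences.dist_ofDigits_le {M : ℕ} {g : (ℕ → Fin M) → X}
    (hg : SeparatesSequences δ b g) (hb : 1 < b) (hδ : 0 < δ) (hM : 1 < M) (ω ω' : ℕ → Fin M) :
    dist (Real.ofDigits ω) (Real.ofDigits ω')
      ≤ (1 / δ) ^ Real.logb b M * dist (g ω) (g ω') ^ Real.logb b M := by
  rcases eq_or_ne ω ω' with rfl | hne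
  · rw [dist_self]
    positivity
  have hb0 : 0 < b := one_pos.trans hb
  have hM_eq : b ^ Real.logb b M = M := Real.rpow_logb hb0 hb.ne' (mod_cast one_pos.trans hM)
  have hlog : 0 ≤ Real.logb b M := Real.logb_nonneg hb (mod_cast hM.le)
  obtain ⟨q, hmin, hq⟩ := hg.exists_le_dist hne
  calc dist (Real.ofDigits ω) (Real.ofDigits ω') ≤ ((M : ℝ) ^ q)⁻¹ :=
        Real.abs_ofDigits_sub_ofDigits_le hmin
    _ = (1 / δ * (δ / b ^ q)) ^ Real.logb b M := by
        rw [one_div_mul_eq_div, div_div_cancel_left' hδ.ne', Real.inv_rpow (by positivity),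
          ← Real.rpow_pow_comm hb0.le, hM_eq]
    _ ≤ (1 / δ * dist (g ω) (g ω')) ^ Real.logb b M := by gcongr
    _ = (1 / δ) ^ Real.logb b M * dist (g ω) (g ω') ^ Real.logb b M :=
        Real.mul_rpow (by positivity) dist_nonneg

theorem SeparatesSequences.ofReal_logb_le_dimH_range {M : ℕ} {g : (ℕ → Fin M) → X}
    (hg : SeparatesSequences δ b g) (hb : 1 < b) (hδ : 0 < δ) :
    ENNReal.ofReal (Real.logb b M) ≤ dimH (range g) := by
  rcases le_or_gt M 1 with hM | hM
  · have hlog : Real.logb b M ≤ 0 := Real.logb_nonpos hb M.cast_nonneg (mod_cast hM)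
    rw [ENNReal.ofReal_of_nonpos hlog]
    exact zero_le
  set ρ := Real.logb b M
  have hρ : 0 < ρ := Real.logb_pos hb (mod_cast hM)
  have : Nonempty (ℕ → Fin M) := ⟨fun _ => ⟨0, one_pos.trans hM⟩⟩
  have hleft := Function.leftInverse_invFun (hg.injective (one_pos.trans hb) hδ)
  have hsurj : Icc (0 : ℝ) 1 ⊆ (Real.ofDigits ∘ Function.invFun g) '' range g := fun y hy => by
    obtain ⟨ω, -, hω⟩ := Real.ofDigits_SurjOn hM hy
    exact ⟨g ω, mem_range_self ω, by rw [Function.comp_apply, hleft, hω]⟩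
  refine ofReal_le_dimH_of_holderOnWith (C := ((1 / δ) ^ ρ).toNNReal) hρ ?_ hsurj
  rintro _ ⟨ω, rfl⟩ _ ⟨ω', rfl⟩
  rw [Function.comp_apply, Function.comp_apply, hleft, hleft, edist_dist, edist_dist,
    Real.coe_toNNReal _ hρ.le, ENNReal.ofReal_rpow_of_nonneg dist_nonneg hρ.le]
  change _ ≤ ENNReal.ofReal _ * _
  rw [← ENNReal.ofReal_mul (by positivity)]
  exact ENNReal.ofReal_le_ofReal (hg.dist_ofDigits_le hb hδ hM ω ω')

end Separation

theorem dimH_le_ofReal_logb_of_covers {X : Type*} [MetricSpace X] {s : Set X} {M : ℕ} {b : ℝ}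
    (hb : 1 < b) {ι : ℕ → Type*} [∀ k, Fintype (ι k)] (hcard : ∀ k, Fintype.card (ι k) ≤ M ^ k)
    (E : ∀ k, ι k → Set X) (hdiam : ∀ k i, Metric.ediam (E k i) ≤ ENNReal.ofReal (b ^ k)⁻¹)
    (hcover : ∀ k, s ⊆ ⋃ i, E k i) : dimH s ≤ ENNReal.ofReal (Real.logb b M) := by
  rcases M.eq_zero_or_pos with rfl | hM
  · have : IsEmpty (ι 1) := Fintype.card_eq_zero_iff.1 (Nat.le_zero.1 (by simpa using hcard 1))
    have hs : s = ∅ := subset_empty_iff.1 ((hcover 1).trans (by simp))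
    simp [hs]
  have hb0 : 0 < b := one_pos.trans hb
  set d := Real.logb b M
  have hd : 0 ≤ d := Real.logb_nonneg hb (mod_cast hM)
  have hM_eq : b ^ d = M := Real.rpow_logb hb0 hb.ne' (mod_cast hM)
  have hsum : ∀ k, ∑ i, Metric.ediam (E k i) ^ d ≤ 1 := fun k => by
    calc ∑ i, Metric.ediam (E k i) ^ d ≤ ∑ _i : ι k, ENNReal.ofReal (b ^ k)⁻¹ ^ d := by
          gcongr with i; exact hdiam k i
      _ = Fintype.card (ι k) * ENNReal.ofReal ((M : ℝ) ^ k)⁻¹ := by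
          rw [Finset.sum_const, Finset.card_univ, nsmul_eq_mul,
            ENNReal.ofReal_rpow_of_nonneg (by positivity) hd, Real.inv_rpow (by positivity),
            ← Real.rpow_pow_comm hb0.le, hM_eq]
      _ ≤ ((M ^ k : ℕ) : ENNReal) * ENNReal.ofReal ((M : ℝ) ^ k)⁻¹ := by
          gcongr; exact hcard k
      _ = 1 := by
          rw [← ENNReal.ofReal_natCast, ← ENNReal.ofReal_mul (by positivity), Nat.cast_pow,
            mul_inv_cancel₀ (by positivity), ENNReal.ofReal_one]
  have hradius : Tendsto (fun k => ENNReal.ofReal (b ^ k)⁻¹) atTop (nhds 0) := by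
    rw [← ENNReal.ofReal_zero]
    exact ENNReal.tendsto_ofReal
      (tendsto_inv_atTop_zero.comp (tendsto_pow_atTop_atTop_of_one_lt hb))
  borelize X
  have hmeasure : Measure.hausdorffMeasure d s ≤ 1 := by
    refine (Measure.hausdorffMeasure_le_liminf_sum (l := atTop) d s _ hradius E
      (Eventually.of_forall hdiam) (Eventually.of_forall hcover)).trans ?_
    exact (liminf_le_liminf (Eventually.of_forall hsum)).trans_eq (liminf_const _)
  exact dimH_le_of_hausdorffMeasure_ne_top (d := d.toNNReal) (by
    rw [Real.coe_toNNReal _ hd]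
    exact ne_top_of_le_ne_top ENNReal.one_ne_top hmeasure)

end DimensionBounds

section Words

variable {β t v : ℝ} {w w' : List ℕ} {S S' S'' : Set ℝ}

/-- The value in base `β` of the digits `w` followed by a tail of value `v`. -/
noncomputable def wordEval (β : ℝ) : List ℕ → ℝ → ℝ
  | [], v => v
  | d :: w, v => (d + wordEval β w v) / β

theorem wordEval_append (β : ℝ) (w w' : List ℕ) (v : ℝ) :
    wordEval β (w ++ w') v = wordEval β w (wordEval β w' v) := by
  induction w with
  | nil => rfl
  | cons d w ih => rw [List.cons_append, wordEval, wordEval, ih]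

theorem wordEval_sub (β : ℝ) (w : List ℕ) (u v : ℝ) :
    wordEval β w u - wordEval β w v = (u - v) / β ^ w.length := by
  induction w with
  | nil => simp [wordEval]
  | cons d w ih =>
    rw [wordEval, wordEval, ← sub_div, add_sub_add_left_eq_sub, ih, div_div, List.length_cons,
      pow_succ]

theorem wordEval_strictMono (hβ : 0 < β) (w : List ℕ) : StrictMono (wordEval β w) := by
  intro u v huv
  rw [← sub_pos, wordEval_sub]
  exact div_pos (sub_pos.2 huv) (pow_pos hβ _)

theorem wordEval_nonneg (hβ : 0 < β) (w : List ℕ) (hv : 0 ≤ v) : 0 ≤ wordEval β w v := by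
  induction w with
  | nil => exact hv
  | cons d w ih => exact div_nonneg (add_nonneg d.cast_nonneg ih) hβ.le

/-- Every nonempty suffix of `w`, followed by a tail of value `v`, has value in `[t, 1)`: if also
`v ∈ [t, 1)`, then `w` lists the first `β`-digits of `wordEval β w v` and its orbit stays in
`[t, 1)` while they are read. -/
def Admissible (β t : ℝ) : List ℕ → ℝ → Prop
  | [], _ => True
  | d :: w, v => wordEval β (d :: w) v ∈ Ico t 1 ∧ Admissible β t w v

theorem admissible_append :
    Admissible β t (w ++ w') v ↔ Admissible β t w (wordEval β w' v) ∧ Admissible β t w' v := by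
  induction w with
  | nil => simp [Admissible]
  | cons d w ih =>
    rw [List.cons_append, Admissible, Admissible, ih, ← List.cons_append, wordEval_append,
      and_assoc]

theorem Admissible.wordEval_mem_Ico (h : Admissible β t w v) (hv : v ∈ Ico t 1) :
    wordEval β w v ∈ Ico t 1 := by
  cases w with
  | nil => exact hv
  | cons d w => exact h.1

/-- Prepending `w` maps tails with values in `S` admissibly to values in `S'`. -/
def AdmMapsTo (β t : ℝ) (w : List ℕ) (S S' : Set ℝ) : Prop :=
  ∀ v ∈ S, Admissible β t w v ∧ wordEval β w v ∈ S'

theorem AdmMapsTo.mono {R R' : Set ℝ} (h : AdmMapsTo β t w S S') (hR : R ⊆ S) (hR' : S' ⊆ R') :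
    AdmMapsTo β t w R R' :=
  fun v hv => (h v (hR hv)).imp_right fun hw => hR' hw

theorem admMapsTo_nil (β t : ℝ) (S : Set ℝ) : AdmMapsTo β t [] S S :=
  fun _ hv => ⟨trivial, hv⟩

theorem AdmMapsTo.append (h : AdmMapsTo β t w S' S'') (h' : AdmMapsTo β t w' S S') :
    AdmMapsTo β t (w ++ w') S S'' := fun v hv => by
  obtain ⟨hadm', hmem'⟩ := h' v hv
  obtain ⟨hadm, hmem⟩ := h _ hmem'
  exact ⟨admissible_append.2 ⟨hadm, hadm'⟩, by rwa [wordEval_append]⟩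

theorem AdmMapsTo.cons {d : ℕ} (hd : MapsTo (fun v => (d + v) / β) S' (Ico t 1 ∩ S''))
    (h : AdmMapsTo β t w S S') : AdmMapsTo β t (d :: w) S S'' :=
  fun v hv => ⟨⟨(hd (h v hv).2).1, (h v hv).1⟩, (hd (h v hv).2).2⟩

theorem admMapsTo_flatten_replicate (h : AdmMapsTo β t w S S) (n : ℕ) :
    AdmMapsTo β t (List.replicate n w).flatten S S := by
  induction n with
  | zero => exact admMapsTo_nil β t S
  | succ n ih => exact h.append ih

end Words

section SurvivorSet

variable {β t v x y : ℝ} {w : List ℕ} {n : ℕ}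

theorem Tbeta_mem_Ico (β x : ℝ) : Tbeta β x ∈ Ico (0 : ℝ) 1 :=
  ⟨Int.fract_nonneg _, Int.fract_lt_one _⟩

theorem iterate_Tbeta_mem_Ico (hx : x ∈ Ico (0 : ℝ) 1) (n : ℕ) :
    (Tbeta β)^[n] x ∈ Ico (0 : ℝ) 1 :=
  Function.Iterate.rec (· ∈ Ico (0 : ℝ) 1) hx (fun y _ => Tbeta_mem_Ico β y) n

theorem Tbeta_natCast_add_div (hβ : β ≠ 0) (d : ℕ) (hv : v ∈ Ico (0 : ℝ) 1) :
    Tbeta β ((d + v) / β) = v := by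
  rw [Tbeta, mul_div_cancel₀ _ hβ, Int.fract_natCast_add, Int.fract_eq_self.2 hv]

theorem Admissible.iterate_Tbeta (hβ : β ≠ 0) (ht : 0 ≤ t) (h : Admissible β t w v)
    (hv : v ∈ Ico t 1) : (Tbeta β)^[w.length] (wordEval β w v) = v := by
  induction w with
  | nil => rfl
  | cons d w ih =>
    have hw : wordEval β w v ∈ Ico 0 1 := Ico_subset_Ico_left ht (h.2.wordEval_mem_Ico hv)
    rw [List.length_cons, Function.iterate_succ_apply, wordEval, Tbeta_natCast_add_div hβ d hw,
      ih h.2]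

theorem Admissible.le_iterate_Tbeta (hβ : β ≠ 0) (ht : 0 ≤ t) (h : Admissible β t w v)
    (hv : v ∈ Ico t 1) (hn : n ≤ w.length) : t ≤ (Tbeta β)^[n] (wordEval β w v) := by
  induction w generalizing n with
  | nil => rw [Nat.le_zero.1 hn]; exact hv.1
  | cons d w ih =>
    cases n with
    | zero => exact h.1.1
    | succ n =>
      have hw : wordEval β w v ∈ Ico 0 1 := Ico_subset_Ico_left ht (h.2.wordEval_mem_Ico hv)
      rw [Function.iterate_succ_apply, wordEval, Tbeta_natCast_add_div hβ d hw]
      exact ih h.2 (Nat.le_of_succ_le_succ hn)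

theorem Kset_antitone (β : ℝ) : Antitone (Kset β) :=
  fun _ _ h _ hx => ⟨hx.1, fun n => h.trans (hx.2 n)⟩

theorem Kset_subset_Ico : Kset β t ⊆ Ico t 1 :=
  fun _ hx => ⟨hx.2 0, hx.1.2⟩

theorem iterate_Tbeta_mem_Kset (hx : x ∈ Kset β t) (n : ℕ) : (Tbeta β)^[n] x ∈ Kset β t :=
  ⟨iterate_Tbeta_mem_Ico hx.1 n, fun k => by
    rw [← Function.iterate_add_apply]; exact hx.2 (k + n)⟩

theorem Admissible.wordEval_mem_Kset (hβ : β ≠ 0) (ht : 0 ≤ t) (h : Admissible β t w v)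
    (hv : v ∈ Kset β t) : wordEval β w v ∈ Kset β t := by
  have hvI := Kset_subset_Ico hv
  refine ⟨Ico_subset_Ico_left ht (h.wordEval_mem_Ico hvI), fun n => ?_⟩
  rcases le_total n w.length with hn | hn
  · exact h.le_iterate_Tbeta hβ ht hvI hn
  · obtain ⟨k, rfl⟩ := Nat.exists_eq_add_of_le' hn
    rw [Function.iterate_add_apply, h.iterate_Tbeta hβ ht hvI]
    exact hv.2 k

theorem natCast_greedy_zero_add_Tbeta (hβ : 0 ≤ β) (hx : 0 ≤ x) :
    (greedy β x 0 : ℝ) + Tbeta β x = β * x := by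
  have hfloor : (0 : ℤ) ≤ ⌊β * x⌋ := Int.floor_nonneg.2 (mul_nonneg hβ hx)
  have hcast : ((⌊β * x⌋.toNat : ℕ) : ℝ) = ⌊β * x⌋ :=
    mod_cast congrArg (Int.cast (R := ℝ)) (Int.toNat_of_nonneg hfloor)
  rw [greedy, Function.iterate_zero, id_eq, hcast, Tbeta, Int.floor_add_fract]

theorem greedy_lt_two (hβ : β ∈ Icc (0 : ℝ) 2) (hx : x ∈ Ico (0 : ℝ) 1) (i : ℕ) :
    greedy β x i < 2 := by
  have hy := iterate_Tbeta_mem_Ico (β := β) hx i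
  have hfloor : ⌊β * (Tbeta β)^[i] x⌋ < 2 := Int.floor_lt.2 (by
    push_cast
    nlinarith [hβ.1, hβ.2, hy.1, hy.2])
  simp only [greedy]
  omega

/-- The word formed by the first `n` greedy digits of `x`. -/
noncomputable def greedyWord (β : ℝ) (n : ℕ) (x : ℝ) : List ℕ :=
  (List.range n).map (greedy β x)

@[simp]
theorem length_greedyWord (β : ℝ) (n : ℕ) (x : ℝ) : (greedyWord β n x).length = n := by
  simp [greedyWord]

theorem greedyWord_add (β : ℝ) (k n : ℕ) (x : ℝ) :
    greedyWord β (k + n) x = greedyWord β k x ++ greedyWord β n ((Tbeta β)^[k] x) := by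
  simp only [greedyWord, List.range_add, List.map_append, List.map_map]
  congr 2
  ext i
  simp only [Function.comp_apply, greedy, ← Function.iterate_add_apply, Nat.add_comm]

theorem greedyWord_succ (β : ℝ) (n : ℕ) (x : ℝ) :
    greedyWord β (n + 1) x = greedy β x 0 :: greedyWord β n (Tbeta β x) := by
  rw [Nat.add_comm, greedyWord_add]
  rfl

theorem wordEval_greedyWord (hβ : 0 < β) (n : ℕ) (hx : x ∈ Ico (0 : ℝ) 1) :
    wordEval β (greedyWord β n x) ((Tbeta β)^[n] x) = x := by
  induction n generalizing x with
  | zero => rfl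
  | succ n ih =>
    rw [greedyWord_succ, Function.iterate_succ_apply, wordEval, ih (Tbeta_mem_Ico β x),
      natCast_greedy_zero_add_Tbeta hβ.le hx.1, mul_div_cancel_left₀ _ hβ.ne']

theorem abs_sub_lt_of_greedyWord_eq (hβ : 0 < β) (hx : x ∈ Ico (0 : ℝ) 1)
    (hy : y ∈ Ico (0 : ℝ) 1) (h : greedyWord β n x = greedyWord β n y) :
    |x - y| < 1 / β ^ n := by
  have hx' := iterate_Tbeta_mem_Ico (β := β) hx n
  have hy' := iterate_Tbeta_mem_Ico (β := β) hy n
  have hpow := pow_pos hβ n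
  rw [← wordEval_greedyWord hβ n hx, ← wordEval_greedyWord hβ n hy, h, wordEval_sub,
    length_greedyWord, abs_div, abs_of_pos hpow]
  gcongr
  rw [abs_sub_lt_iff]
  constructor <;> linarith [hx'.1, hx'.2, hy'.1, hy'.2]

theorem exists_eq_greedyWord_of_infix (h : w <:+: greedyWord β n x) :
    ∃ k, w = greedyWord β w.length ((Tbeta β)^[k] x) := by
  obtain ⟨l, r, hlr⟩ := h
  have hlen : n = l.length + (w.length + r.length) := by
    rw [← length_greedyWord β n x, ← hlr]; simp
  rw [hlen, greedyWord_add, List.append_assoc] at hlr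
  have hw := (List.append_inj hlr (by simp)).2
  rw [greedyWord_add] at hw
  exact ⟨l.length, (List.append_inj hw (by simp)).1⟩

end SurvivorSet

section OneOrbit

variable {β t v : ℝ} {m k : ℕ}

/-- The orbit of `1` under the branch `x ↦ βx - 1`: as long as it stays in `[0, 1]`, these are the
values of the tails of the `β`-expansion of `1`. -/
def oneOrbit (β : ℝ) : ℕ → ℝ
  | 0 => 1
  | k + 1 => β * oneOrbit β k - 1

theorem oneOrbit_eq_pow_sub_sum (β : ℝ) (k : ℕ) :
    oneOrbit β k = β ^ k - ∑ i ∈ Finset.range k, β ^ i := by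
  induction k with
  | zero => simp [oneOrbit]
  | succ k ih =>
    rw [oneOrbit, ih, Finset.sum_range_succ', mul_sub, Finset.mul_sum]
    simp only [pow_succ', pow_zero]
    ring

theorem oneOrbit_sub_oneOrbit_succ (β : ℝ) (k : ℕ) :
    oneOrbit β k - oneOrbit β (k + 1) = β ^ k * (2 - β) := by
  induction k with
  | zero => simp only [oneOrbit, pow_zero]; ring
  | succ k ih => rw [pow_succ, mul_right_comm, ← ih, oneOrbit, oneOrbit, oneOrbit]; ring

theorem oneOrbit_strictAnti (hβ : β ∈ Ioo (0 : ℝ) 2) : StrictAnti (oneOrbit β) :=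
  strictAnti_nat_of_succ_lt fun k => sub_pos.1 <| by
    rw [oneOrbit_sub_oneOrbit_succ]
    exact mul_pos (pow_pos hβ.1 k) (sub_pos.2 hβ.2)

theorem oneOrbit_le_one (hβ : β ∈ Ioo (0 : ℝ) 2) (k : ℕ) : oneOrbit β k ≤ 1 :=
  (oneOrbit_strictAnti hβ).antitone k.zero_le

theorem wordEval_ones_oneOrbit (hβ : β ≠ 0) (j i : ℕ) :
    wordEval β (List.replicate i 1) (oneOrbit β (j + i)) = oneOrbit β j := by
  induction i generalizing j with
  | zero => rfl
  | succ i ih =>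
    rw [List.replicate_succ, wordEval, ← Nat.add_assoc, Nat.add_right_comm, ih, oneOrbit,
      Nat.cast_one, add_sub_cancel, mul_div_cancel_left₀ _ hβ]

theorem wordEval_ones (hβ : β ≠ 0) (j i : ℕ) (v : ℝ) :
    wordEval β (List.replicate i 1) v = oneOrbit β j - (oneOrbit β (j + i) - v) / β ^ i := by
  have h := wordEval_sub β (List.replicate i 1) (oneOrbit β (j + i)) v
  rw [wordEval_ones_oneOrbit hβ, List.length_replicate] at h
  linarith

theorem admMapsTo_ones (hβ : β ∈ Ico (1 : ℝ) 2) (t : ℝ) (j i : ℕ) :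
    AdmMapsTo β t (List.replicate i 1) (Ico t (oneOrbit β (j + i))) (Ico t (oneOrbit β j)) := by
  induction i generalizing j with
  | zero => exact admMapsTo_nil β t _
  | succ i ih =>
    rw [← Nat.add_assoc, Nat.add_right_comm]
    refine AdmMapsTo.cons (S' := Ico t (oneOrbit β (j + 1))) (fun v ⟨htv, hv⟩ => ?_) (ih (j + 1))
    have hβ0 : 0 < β := one_pos.trans_le hβ.1
    have hj := oneOrbit_le_one ⟨hβ0, hβ.2⟩ j
    have hv1 := hv.trans_le (oneOrbit_le_one ⟨hβ0, hβ.2⟩ (j + 1))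
    rw [oneOrbit] at hv
    have hlower : t ≤ ((1 : ℕ) + v) / β := by
      rw [le_div_iff₀ hβ0, Nat.cast_one]
      nlinarith [hβ.1, hβ.2]
    have hupper : ((1 : ℕ) + v) / β < oneOrbit β j := by
      rw [div_lt_iff₀' hβ0, Nat.cast_one]
      linarith
    exact ⟨⟨hlower, hupper.trans_le hj⟩, hlower, hupper⟩

/-- `β ∈ (1, 2)` satisfies `β ^ (m + 1) = β ^ m + ⋯ + 1`, expressed through the orbit of `1`. -/
structure IsMultinacciOrder (β : ℝ) (m : ℕ) : Prop where
  one_lt : 1 < β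
  oneOrbit_succ : oneOrbit β (m + 1) = 0

theorem IsMultinacci.exists_order (h : IsMultinacci β) (hβ : 1 < β) :
    ∃ m, IsMultinacciOrder β m := by
  obtain ⟨m, -, hm⟩ := h
  exact ⟨m, hβ, by rw [oneOrbit_eq_pow_sub_sum, hm, sub_self]⟩

namespace IsMultinacciOrder

theorem pos (h : IsMultinacciOrder β m) : 0 < β := one_pos.trans h.one_lt

theorem lt_two (h : IsMultinacciOrder β m) : β < 2 := by
  by_contra! hβ
  have hge : ∀ k, 1 ≤ oneOrbit β k := fun k => by
    induction k with
    | zero => exact le_rfl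
    | succ k ih => rw [oneOrbit]; nlinarith
  linarith [hge (m + 1), h.oneOrbit_succ]

theorem mem_Ico (h : IsMultinacciOrder β m) : β ∈ Ico (1 : ℝ) 2 := ⟨h.one_lt.le, h.lt_two⟩

theorem mem_Ioo (h : IsMultinacciOrder β m) : β ∈ Ioo (0 : ℝ) 2 := ⟨h.pos, h.lt_two⟩

theorem one_le (h : IsMultinacciOrder β m) : 1 ≤ m := by
  by_contra! hm
  have hR := h.oneOrbit_succ
  rw [Nat.lt_one_iff.1 hm, oneOrbit, oneOrbit] at hR
  linarith [h.one_lt]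

theorem oneOrbit_order (h : IsMultinacciOrder β m) : oneOrbit β m = 1 / β := by
  have hR := h.oneOrbit_succ
  rw [oneOrbit] at hR
  rw [eq_div_iff h.pos.ne']
  linarith

theorem one_div_le_oneOrbit (h : IsMultinacciOrder β m) (hk : k ≤ m) : 1 / β ≤ oneOrbit β k :=
  h.oneOrbit_order ▸ (oneOrbit_strictAnti h.mem_Ioo).antitone hk

theorem one_div_lt_one (h : IsMultinacciOrder β m) : 1 / β < 1 :=
  (div_lt_one h.pos).2 h.one_lt

theorem one_sub_lt_one_div (h : IsMultinacciOrder β m) : 1 - 1 / β < 1 / β := by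
  have := one_div_lt_one_div_of_lt h.pos h.lt_two
  linarith

theorem exists_mem_Ico_oneOrbit (h : IsMultinacciOrder β m) {x : ℝ} (hx : x ∈ Ico (0 : ℝ) 1) :
    ∃ k ≤ m, x ∈ Ico (oneOrbit β (k + 1)) (oneOrbit β k) := by
  by_contra! hno
  have hlt : ∀ k ≤ m + 1, x < oneOrbit β k := fun k => by
    induction k with
    | zero => exact fun _ => hx.2
    | succ k ih =>
      intro hk
      by_contra! hle
      exact hno k (Nat.le_of_succ_le_succ hk) ⟨hle, ih (Nat.le_of_succ_le hk)⟩
  exact (hlt (m + 1) le_rfl).not_ge (h.oneOrbit_succ ▸ hx.1)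

end IsMultinacciOrder

/-- The word `0 1 ^ m`, whose periodic repetition is the shift of `δ(β) = (1 ^ m 0) ^ ∞`. -/
def fullBlock (m : ℕ) : List ℕ := 0 :: List.replicate m 1

@[simp]
theorem length_fullBlock (m : ℕ) : (fullBlock m).length = m + 1 := by simp [fullBlock]

theorem wordEval_fullBlock (h : IsMultinacciOrder β m) (v : ℝ) :
    wordEval β (fullBlock m) v = 1 / β - (1 / β - v) / β ^ (m + 1) := by
  rw [fullBlock, wordEval, wordEval_ones h.pos.ne' 0 m, Nat.zero_add, h.oneOrbit_order, oneOrbit,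
    pow_succ, ← div_div, Nat.cast_zero, zero_add, sub_div]

theorem admMapsTo_fullBlock (h : IsMultinacciOrder β m) (t : ℝ) :
    AdmMapsTo β t (fullBlock m) (Ico t (1 / β)) (Ico t (1 / β)) := fun v ⟨htv, hv⟩ => by
  have hones := (admMapsTo_ones h.mem_Ico t 0 m v
    ⟨htv, by rwa [Nat.zero_add, h.oneOrbit_order]⟩).1
  have hgap : 0 < (1 / β - v) / β ^ (m + 1) := div_pos (sub_pos.2 hv) (pow_pos h.pos _)
  have hgap' : (1 / β - v) / β ^ (m + 1) ≤ 1 / β - v :=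
    div_le_self (sub_pos.2 hv).le (one_le_pow₀ h.one_lt.le)
  have hmem : wordEval β (fullBlock m) v ∈ Ico t (1 / β) := by
    rw [wordEval_fullBlock h]
    constructor <;> linarith
  exact ⟨⟨Ico_subset_Ico_right h.one_div_lt_one.le hmem, hones⟩, hmem⟩

theorem wordEval_fullBlocks (h : IsMultinacciOrder β m) (N : ℕ) (v : ℝ) :
    wordEval β (List.replicate N (fullBlock m)).flatten v
      = 1 / β - (1 / β - v) / β ^ ((m + 1) * N) := by
  induction N with
  | zero => simp [wordEval]
  | succ N ih =>
    rw [List.replicate_succ, List.flatten_cons, wordEval_append, wordEval_fullBlock h, ih,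
      sub_sub_cancel, div_div, ← pow_add, Nat.mul_succ]

end OneOrbit

section Connectors

variable {β t ε x : ℝ} {m N j k r : ℕ}

/-- Parameters for which the blocks `(0 1 ^ m) ^ N` lead every admissible tail below `1 / β` into
`[1 / β - ε, 1 / β)`, the anchor interval, through points of `[t, 1)`. -/
structure AnchorParams (β : ℝ) (m : ℕ) (t ε : ℝ) (N : ℕ) : Prop extends IsMultinacciOrder β m where
  nonneg : 0 ≤ t
  pos_gap : 0 < ε
  add_gap_le : t + ε ≤ 1 - 1 / β
  one_div_pow_le : 1 / β ^ ((m + 1) * N) ≤ ε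

theorem exists_anchorParams (h : IsMultinacciOrder β m) (ht : 0 ≤ t) (hε : 0 < ε)
    (htε : t + ε ≤ 1 - 1 / β) : ∃ N, AnchorParams β m t ε N := by
  obtain ⟨N, hN⟩ := exists_pow_lt_of_lt_one hε h.one_div_lt_one
  refine ⟨N, h, ht, hε, htε, le_trans ?_ hN.le⟩
  rw [one_div_pow]
  exact one_div_le_one_div_of_le (pow_pos h.pos N)
    (pow_le_pow_right₀ h.one_lt.le (Nat.le_mul_of_pos_left N m.succ_pos))

/-- The anchor interval `[1 / β - ε, 1 / β)`, between whose points all the words below lead. -/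
def anchor (β ε : ℝ) : Set ℝ := Ico (1 / β - ε) (1 / β)

/-- The word `(0 1 ^ m) ^ N 0 1 ^ k`, which leads tails just below `oneOrbit β k` into the
anchor interval. -/
def connector (m N k : ℕ) : List ℕ := (List.replicate N (fullBlock m)).flatten ++ fullBlock k

theorem length_connector (m N k : ℕ) : (connector m N k).length = N * (m + 1) + (k + 1) := by
  simp [connector]

namespace AnchorParams

theorem admMapsTo_fullBlocks (h : AnchorParams β m t ε N) :
    AdmMapsTo β t (List.replicate N (fullBlock m)).flatten (Ico t (1 / β)) (anchor β ε) := by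
  intro v hv
  obtain ⟨hadm, hmem⟩ :=
    admMapsTo_flatten_replicate (admMapsTo_fullBlock h.toIsMultinacciOrder t) N v hv
  have hgap : (1 / β - v) / β ^ ((m + 1) * N) ≤ ε := by
    refine le_trans ?_ h.one_div_pow_le
    have hpow := pow_pos h.pos ((m + 1) * N)
    gcongr
    linarith [h.one_div_lt_one, h.nonneg, hv.1]
  refine ⟨hadm, ?_, hmem.2⟩
  rw [wordEval_fullBlocks h.toIsMultinacciOrder]
  linarith

theorem admMapsTo_fullBlock_of_near (h : AnchorParams β m t ε N) (k : ℕ) :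
    AdmMapsTo β t (fullBlock k)
      (Ico (max t (oneOrbit β (k + 1) - ε)) (oneOrbit β k)) (Ico t (1 / β)) := by
  intro v ⟨hv, hvk⟩
  obtain ⟨hadm, hmem⟩ :=
    admMapsTo_ones h.mem_Ico t 0 k v ⟨(le_max_left _ _).trans hv, by rwa [Nat.zero_add]⟩
  have hgap : (oneOrbit β k - v) / β ^ k ≤ 2 - β + ε := by
    rw [div_le_iff₀' (pow_pos h.pos k), mul_add, ← oneOrbit_sub_oneOrbit_succ]
    have := le_mul_of_one_le_left h.pos_gap.le (one_le_pow₀ h.one_lt.le (n := k))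
    linarith [(le_max_right t _).trans hv]
  have hlower : β * t ≤ wordEval β (List.replicate k 1) v := by
    rw [wordEval_ones h.pos.ne' 0 k, Nat.zero_add, oneOrbit]
    have := mul_le_mul_of_nonneg_left h.add_gap_le h.pos.le
    rw [mul_sub, mul_one_div_cancel h.pos.ne'] at this
    nlinarith [h.one_lt, h.pos_gap]
  have hmem' : wordEval β (fullBlock k) v ∈ Ico t (1 / β) := by
    rw [fullBlock, wordEval, Nat.cast_zero, zero_add]
    exact ⟨(le_div_iff₀' h.pos).2 hlower, div_lt_div_of_pos_right hmem.2 h.pos⟩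
  exact ⟨⟨Ico_subset_Ico_right h.one_div_lt_one.le hmem', hadm⟩, hmem'⟩

theorem admMapsTo_connector (h : AnchorParams β m t ε N) (k : ℕ) :
    AdmMapsTo β t (connector m N k)
      (Ico (max t (oneOrbit β (k + 1) - ε)) (oneOrbit β k)) (anchor β ε) :=
  h.admMapsTo_fullBlocks.append (h.admMapsTo_fullBlock_of_near k)

theorem le_one_div_sub (h : AnchorParams β m t ε N) : t ≤ 1 / β - ε := by
  linarith [h.add_gap_le, h.one_sub_lt_one_div]

theorem admMapsTo_connector_self (h : AnchorParams β m t ε N) :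
    AdmMapsTo β t (connector m N m) (anchor β ε) (anchor β ε) :=
  (h.admMapsTo_connector m).mono (Ico_subset_Ico
    (max_le h.le_one_div_sub (by
      rw [h.oneOrbit_succ]
      exact sub_le_sub_right (one_div_nonneg.2 h.pos.le) ε)) h.oneOrbit_order.ge) subset_rfl

theorem admMapsTo_connector_pred (h : AnchorParams β m t ε N) :
    AdmMapsTo β t (connector m N (m - 1)) (Icc (1 / β - ε) (1 / β)) (anchor β ε) := by
  have hm := Nat.sub_add_cancel h.one_le
  refine (h.admMapsTo_connector (m - 1)).mono (Icc_subset_Ico_iff ?_ |>.2 ⟨?_, ?_⟩)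
    subset_rfl
  · exact sub_le_self _ h.pos_gap.le
  · rw [hm, h.oneOrbit_order]
    exact max_le h.le_one_div_sub le_rfl
  · rw [← h.oneOrbit_order]
    exact oneOrbit_strictAnti h.mem_Ioo (by omega)

end AnchorParams

/-- A word which leads the anchor interval into itself and whose length can be adjusted through
the number `r ≤ m` of longer connectors. -/
def filler (m N r : ℕ) : List ℕ :=
  (List.replicate (m - r) (connector m N (m - 1))).flatten ++
    (List.replicate r (connector m N m)).flatten

theorem length_filler (hm : 1 ≤ m) (hr : r ≤ m) (N : ℕ) :
    (filler m N r).length = m * (N * (m + 1) + m) + r := by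
  simp only [filler, List.length_append, List.length_flatten, List.map_replicate,
    List.sum_replicate_nat, length_connector, Nat.sub_add_cancel hm]
  obtain ⟨k, rfl⟩ := Nat.exists_eq_add_of_le hr
  rw [Nat.add_sub_cancel_left]
  ring

namespace AnchorParams

theorem admMapsTo_filler (h : AnchorParams β m t ε N) (r : ℕ) :
    AdmMapsTo β t (filler m N r) (anchor β ε) (anchor β ε) :=
  (admMapsTo_flatten_replicate
    (h.admMapsTo_connector_pred.mono Ico_subset_Icc_self subset_rfl) _).append
    (admMapsTo_flatten_replicate h.admMapsTo_connector_self r)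

theorem admMapsTo_ones_anchor (h : AnchorParams β m t ε N) (hj : j ≤ m) :
    AdmMapsTo β t (List.replicate (m - j) 1) (anchor β ε)
      (Ico (oneOrbit β j - ε) (oneOrbit β j)) := by
  intro v ⟨hv, hv'⟩
  have hjm : oneOrbit β (j + (m - j)) = 1 / β := by
    rw [Nat.add_sub_of_le hj, h.oneOrbit_order]
  obtain ⟨hadm, hmem⟩ := admMapsTo_ones h.mem_Ico t j (m - j) v
    ⟨h.le_one_div_sub.trans hv, hjm ▸ hv'⟩
  have hgap : (1 / β - v) / β ^ (m - j) ≤ 1 / β - v :=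
    div_le_self (sub_pos.2 hv').le (one_le_pow₀ h.one_lt.le)
  refine ⟨hadm, ?_, hmem.2⟩
  rw [wordEval_ones h.pos.ne' j, hjm]
  linarith

end AnchorParams

theorem exists_oneOrbit_mapsTo (h : IsMultinacciOrder β m) (hε : 0 ≤ ε) (hx : x ∈ Ico (0 : ℝ) 1)
    (hk : k ≤ m) (hxk : x < oneOrbit β k) :
    ∃ j ≤ m, Tbeta β x < oneOrbit β j ∧ MapsTo (fun v => (greedy β x 0 + v) / β)
      (Ico (Tbeta β x - ε) (oneOrbit β j)) (Ico (x - ε) (oneOrbit β k)) := by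
  have hdigit := natCast_greedy_zero_add_Tbeta h.pos.le hx.1
  have hlower : ∀ v, Tbeta β x - ε ≤ v → x - ε ≤ (greedy β x 0 + v) / β := fun v hv => by
    rw [le_div_iff₀' h.pos]
    nlinarith [h.one_lt]
  have hlt := greedy_lt_two ⟨h.pos.le, h.lt_two.le⟩ hx 0
  have hT := Tbeta_mem_Ico β x
  interval_cases greedy β x 0
  · refine ⟨0, m.zero_le, hT.2, fun v hv => ⟨hlower v hv.1, lt_of_lt_of_le ?_
      (h.one_div_le_oneOrbit hk)⟩⟩
    simpa only [Nat.cast_zero, zero_add, oneOrbit] using div_lt_div_of_pos_right hv.2 h.pos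
  · push_cast at hdigit
    have hTk : Tbeta β x < oneOrbit β (k + 1) := by
      rw [oneOrbit]
      nlinarith [h.pos]
    have hkm : k ≠ m := by
      rintro rfl
      exact (hT.1.trans_lt hTk).ne' h.oneOrbit_succ
    refine ⟨k + 1, lt_of_le_of_ne hk hkm, hTk, fun v hv => ⟨hlower v hv.1, ?_⟩⟩
    rw [div_lt_iff₀' h.pos]
    have := hv.2
    rw [oneOrbit] at this
    push_cast
    linarith

theorem exists_admMapsTo_greedyWord (h : IsMultinacciOrder β m) (hε : 0 ≤ ε)
    (hx : x ∈ Kset β (t + ε)) (hk : k ≤ m) (hxk : x < oneOrbit β k) (n : ℕ) :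
    ∃ j ≤ m, (Tbeta β)^[n] x < oneOrbit β j ∧ AdmMapsTo β t (greedyWord β n x)
      (Ico ((Tbeta β)^[n] x - ε) (oneOrbit β j)) (Ico (x - ε) (oneOrbit β k)) := by
  induction n generalizing x k with
  | zero => exact ⟨k, hk, hxk, admMapsTo_nil β t _⟩
  | succ n ih =>
    obtain ⟨i, hi, hxi, hmaps⟩ := exists_oneOrbit_mapsTo h hε hx.1 hk hxk
    obtain ⟨j, hj, hxj, hadm⟩ := ih (iterate_Tbeta_mem_Kset hx 1) hi hxi
    have hsub : Ico (x - ε) (oneOrbit β k) ⊆ Ico t 1 :=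
      Ico_subset_Ico (le_sub_iff_add_le.2 (hx.2 0)) (oneOrbit_le_one h.mem_Ioo k)
    refine ⟨j, hj, hxj, ?_⟩
    rw [greedyWord_succ]
    exact hadm.cons fun v hv => ⟨hsub (hmaps hv), hmaps hv⟩

theorem AnchorParams.exists_wrap (h : AnchorParams β m t ε N) (n : ℕ) (hx : x ∈ Kset β (t + ε)) :
    ∃ P S : List ℕ, P.length = m * (N * (m + 1) + m) + (N * (m + 1) + (m + 1)) ∧
      S.length = m * (N * (m + 1) + m) + m ∧
      AdmMapsTo β t (P ++ greedyWord β n x ++ S) (anchor β ε) (anchor β ε) := by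
  obtain ⟨k, hk, hxk⟩ := h.exists_mem_Ico_oneOrbit hx.1
  obtain ⟨j, hj, hxj, hword⟩ :=
    exists_admMapsTo_greedyWord h.toIsMultinacciOrder h.pos_gap.le hx hk hxk.2 n
  refine ⟨filler m N (m - k) ++ connector m N k, List.replicate (m - j) 1 ++ filler m N j,
    ?_, ?_, ?_⟩
  · rw [List.length_append, length_filler h.one_le (m.sub_le k), length_connector]
    omega
  · rw [List.length_append, length_filler h.one_le hj, List.length_replicate]
    omega
  · have hxt : t ≤ x - ε := le_sub_iff_add_le.2 (hx.2 0)
    have hprefix := (h.admMapsTo_filler (m - k)).append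
      ((h.admMapsTo_connector k).mono
        (Ico_subset_Ico_left (max_le hxt (sub_le_sub_right hxk.1 ε))) subset_rfl)
    have hsuffix := ((h.admMapsTo_ones_anchor hj).mono subset_rfl
      (Ico_subset_Ico_left (sub_le_sub_right hxj.le ε))).append (h.admMapsTo_filler j)
    exact (hprefix.append hword).append hsuffix

end Connectors

section DimensionOfSurvivorSets

variable {β t v v' : ℝ} {w w' : List ℕ} {S : Set ℝ}

theorem div_pow_le_abs_wordEval_sub (hβ : 1 ≤ β) (ht : 0 ≤ t) (hlen : w.length = w'.length)
    (hne : w ≠ w') (hw : Admissible β t w v) (hw' : Admissible β t w' v') (hv : v ∈ Ico t 1)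
    (hv' : v' ∈ Ico t 1) : t / β ^ w.length ≤ |wordEval β w v - wordEval β w' v'| := by
  have hβ0 : 0 < β := one_pos.trans_le hβ
  induction w generalizing w' with
  | nil => exact absurd (List.length_eq_zero_iff.1 hlen.symm).symm hne
  | cons d w ih =>
    cases w' with
    | nil => simp at hlen
    | cons d' w' =>
      have hu := hw.2.wordEval_mem_Ico hv
      have hu' := hw'.2.wordEval_mem_Ico hv'
      have hle : t / β ^ w.length ≤ t := div_le_self ht (one_le_pow₀ hβ)
      rw [wordEval, wordEval, ← sub_div, abs_div, abs_of_pos hβ0, List.length_cons, pow_succ,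
        ← div_div]
      gcongr
      rcases lt_trichotomy d d' with hd | rfl | hd
      · have hd1 : (d : ℝ) + 1 ≤ d' := mod_cast hd
        rw [abs_sub_comm]
        exact le_abs.2 (Or.inl (by linarith [hu.2, hu'.1]))
      · rw [add_sub_add_left_eq_sub]
        exact ih (by simpa using hlen) (by simpa using hne) hw.2 hw'.2
      · have hd1 : (d' : ℝ) + 1 ≤ d := mod_cast hd
        exact le_abs.2 (Or.inl (by linarith [hu.1, hu'.2]))

theorem subset_Kset_of_forall_exists_wordEval (hβ : β ≠ 0) (ht : 0 ≤ t) (hS : S ⊆ Ico t 1)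
    (hstep : ∀ x ∈ S, ∃ w ≠ [], ∃ v ∈ S, Admissible β t w v ∧ x = wordEval β w v) :
    S ⊆ Kset β t := by
  suffices hiter : ∀ n, ∀ x ∈ S, t ≤ (Tbeta β)^[n] x from
    fun x hx => ⟨Ico_subset_Ico_left ht (hS hx), fun n => hiter n x hx⟩
  intro n
  induction n using Nat.strong_induction_on with
  | _ n ih =>
    intro x hx
    obtain ⟨w, hw, v, hv, hadm, rfl⟩ := hstep x hx
    rcases le_or_gt n w.length with hn | hn
    · exact hadm.le_iterate_Tbeta hβ ht (hS hv) hn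
    · obtain ⟨k, rfl⟩ := Nat.exists_eq_add_of_le' hn.le
      rw [Function.iterate_add_apply, hadm.iterate_Tbeta hβ ht (hS hv)]
      exact ih k (Nat.lt_add_of_pos_right (List.length_pos_iff.2 hw)) v hv

theorem exists_coding_Kset {ι : Type*} {X : ι → List ℕ} {L : ℕ} (hβ : 1 < β) (ht : 0 ≤ t)
    (hL : L ≠ 0) (hlen : ∀ i, (X i).length = L) (hS : IsComplete S) (hne : S.Nonempty)
    (hSt : S ⊆ Ico t 1) (hX : ∀ i, AdmMapsTo β t (X i) S S) :
    ∃ g : (ℕ → ι) → ℝ, ∀ ω, g ω ∈ S ∧ g ω ∈ Kset β t ∧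
      g ω = wordEval β (X (ω 0)) (g fun k => ω (k + 1)) := by
  have hβ0 : 0 < β := one_pos.trans hβ
  have hlip : ∀ i, LipschitzWith (β ^ L)⁻¹.toNNReal (wordEval β (X i)) := fun i =>
    LipschitzWith.of_dist_le_mul fun u v => by
      rw [Real.dist_eq, wordEval_sub, hlen, abs_div, abs_of_pos (pow_pos hβ0 L), Real.dist_eq,
        Real.coe_toNNReal _ (by positivity), div_eq_inv_mul]
  have hc : (β ^ L)⁻¹.toNNReal < 1 :=
    Real.toNNReal_lt_one.2 (inv_lt_one_of_one_lt₀ (one_lt_pow₀ hβ hL))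
  obtain ⟨g, hg⟩ := exists_coding hc hlip hS ((Metric.isBounded_Ico t 1).subset hSt) hne
    fun i v hv => (hX i v hv).2
  have hrange : range g ⊆ Kset β t := by
    refine subset_Kset_of_forall_exists_wordEval hβ0.ne' ht
      (range_subset_iff.2 fun ω => hSt (hg ω).1) (forall_mem_range.2 fun ω => ?_)
    exact ⟨X (ω 0), fun h => hL (by rw [← hlen, h, List.length_nil]), _, mem_range_self _,
      (hX (ω 0) _ (hg _).1).1, (hg ω).2⟩
  exact ⟨g, fun ω => ⟨(hg ω).1, hrange (mem_range_self ω), (hg ω).2⟩⟩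

theorem ofReal_logb_card_le_dimH_Kset {ι : Type*} [Finite ι] {X : ι → List ℕ} {L : ℕ}
    (hβ : 1 < β) (ht : 0 < t) (hL : L ≠ 0) (hlen : ∀ i, (X i).length = L)
    (hinj : Function.Injective X) (hS : IsComplete S) (hne : S.Nonempty) (hSt : S ⊆ Ico t 1)
    (hX : ∀ i, AdmMapsTo β t (X i) S S) :
    ENNReal.ofReal (Real.logb (β ^ L) (Nat.card ι)) ≤ dimH (Kset β t) := by
  have hβ0 : 0 < β := one_pos.trans hβ
  let e := (Finite.equivFin ι).symm
  obtain ⟨g, hg⟩ := exists_coding_Kset hβ ht.le hL (fun i => hlen (e i)) hS hne hSt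
    fun i => hX (e i)
  have hsep : SeparatesSequences (t / β ^ L) (β ^ L) g := by
    intro q
    induction q with
    | zero =>
      intro ω ω' _ hω
      have hwords := hinj.ne (e.injective.ne hω)
      have h := div_pow_le_abs_wordEval_sub hβ.le ht.le ((hlen _).trans (hlen _).symm) hwords
        (hX _ _ (hg fun k => ω (k + 1)).1).1 (hX _ _ (hg fun k => ω' (k + 1)).1).1
        (hSt (hg _).1) (hSt (hg _).1)
      rwa [hlen, ← (hg ω).2.2, ← (hg ω').2.2, ← div_one (t / _), ← pow_zero (β ^ L)] at h
    | succ q ih =>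
      intro ω ω' hagree hω
      rw [Real.dist_eq, (hg ω).2.2, (hg ω').2.2, ← hagree 0 q.succ_pos, wordEval_sub, hlen, abs_div,
        abs_of_pos (pow_pos hβ0 L), pow_succ, ← div_div]
      gcongr
      exact ih _ _ (fun i hi => hagree (i + 1) (Nat.succ_lt_succ hi)) hω
  exact (hsep.ofReal_logb_le_dimH_range (one_lt_pow₀ hβ hL) (by positivity)).trans
    (dimH_mono (range_subset_iff.2 fun ω => (hg ω).2.1))

/-- The words of length `n` in the language of the survivor set: the greedy prefixes of its
points. -/
def survivorWords (β t : ℝ) (n : ℕ) : Set (List ℕ) := greedyWord β n '' Kset β t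

theorem length_of_mem_survivorWords {n : ℕ} (hw : w ∈ survivorWords β t n) : w.length = n := by
  obtain ⟨x, -, rfl⟩ := hw
  exact length_greedyWord β n x

theorem finite_survivorWords (hβ : β ∈ Icc (0 : ℝ) 2) (t : ℝ) (n : ℕ) :
    (survivorWords β t n).Finite := by
  refine ((List.finite_length_eq (Fin 2) n).image (List.map Fin.val)).subset ?_
  rintro _ ⟨x, hx, rfl⟩
  refine ⟨(List.range n).map fun i => ⟨greedy β x i, greedy_lt_two hβ hx.1 i⟩, by simp, ?_⟩
  simp [greedyWord, Function.comp_def]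

theorem ncard_survivorWords_add_le (hβ : β ∈ Icc (0 : ℝ) 2) (t : ℝ) (k n : ℕ) :
    (survivorWords β t (k + n)).ncard
      ≤ (survivorWords β t k).ncard * (survivorWords β t n).ncard := by
  have hfin := (finite_survivorWords hβ t k).prod (finite_survivorWords hβ t n)
  have hsub : survivorWords β t (k + n)
      ⊆ (fun p => p.1 ++ p.2) '' survivorWords β t k ×ˢ survivorWords β t n := by
    rintro _ ⟨x, hx, rfl⟩
    exact ⟨(_, _), ⟨mem_image_of_mem _ hx, mem_image_of_mem _ (iterate_Tbeta_mem_Kset hx k)⟩,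
      (greedyWord_add β k n x).symm⟩
  rw [← ncard_prod]
  exact (ncard_le_ncard hsub (hfin.image _)).trans (ncard_image_le hfin)

theorem ncard_survivorWords_mul_le (hβ : β ∈ Icc (0 : ℝ) 2) (t : ℝ) (n k : ℕ) :
    (survivorWords β t (n * k)).ncard ≤ (survivorWords β t n).ncard ^ k := by
  induction k with
  | zero =>
    rw [pow_zero, mul_zero, ← ncard_singleton ([] : List ℕ)]
    exact ncard_le_ncard (image_subset_iff.2 fun _ _ => rfl)
  | succ k ih =>
    rw [Nat.mul_succ, pow_succ]
    exact (ncard_survivorWords_add_le hβ t _ n).trans (Nat.mul_le_mul_right _ ih)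

theorem dimH_Kset_le_ofReal_logb (hβ : β ∈ Ioc (1 : ℝ) 2) (t : ℝ) {n : ℕ} (hn : n ≠ 0) :
    dimH (Kset β t) ≤ ENNReal.ofReal (Real.logb (β ^ n) (survivorWords β t n).ncard) := by
  have hβ0 : 0 < β := one_pos.trans hβ.1
  have hβI : β ∈ Icc 0 2 := ⟨hβ0.le, hβ.2⟩
  have := fun k => (finite_survivorWords hβI t (n * k)).fintype
  refine dimH_le_ofReal_logb_of_covers (one_lt_pow₀ hβ.1 hn)
    (ι := fun k => survivorWords β t (n * k)) (fun k => ?_)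
    (fun k w => {x ∈ Kset β t | greedyWord β (n * k) x = w}) (fun k w => ?_) fun k x hx => ?_
  · rw [fintypeCard_eq_ncard]
    exact ncard_survivorWords_mul_le hβI t n k
  · refine Metric.ediam_le fun x hx y hy => ?_
    rw [edist_dist, Real.dist_eq, ← pow_mul, ← one_div]
    exact ENNReal.ofReal_le_ofReal
      (abs_sub_lt_of_greedyWord_eq hβ0 hx.1.1 hy.1.1 (hx.2.trans hy.2.symm)).le
  · exact mem_iUnion.2 ⟨⟨_, mem_image_of_mem _ hx⟩, hx, rfl⟩

theorem mul_dimH_Kset_le_log_ncard (hβ : β ∈ Ioc (1 : ℝ) 2) (t : ℝ) (n : ℕ) :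
    n * ((dimH (Kset β t)).toReal * Real.log β) ≤ Real.log (survivorWords β t n).ncard := by
  rcases eq_or_ne n 0 with rfl | hn
  · simpa using Real.log_natCast_nonneg _
  have hlog : 0 < Real.log (β ^ n) := Real.log_pos (one_lt_pow₀ hβ.1 hn)
  have h := ENNReal.toReal_mono ENNReal.ofReal_ne_top (dimH_Kset_le_ofReal_logb hβ t hn)
  rw [← Real.log_div_log, ENNReal.toReal_ofReal (div_nonneg (Real.log_natCast_nonneg _) hlog.le),
    le_div_iff₀ hlog, Real.log_pow] at h
  linarith

end DimensionOfSurvivorSets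

section MarkedWords

variable {α : Type*} {A A' C C' w b : List α}

theorem infix_of_append_eq (h : A ++ w ++ C = A' ++ b ++ C') (hle : A'.length ≤ A.length)
    (hlen : A.length + w.length ≤ A'.length + b.length) : w <:+: b := by
  have hA : A' <+: A := by
    refine List.prefix_of_prefix_length_le (l₃ := A ++ w ++ C) ?_ ?_ hle
    · exact ⟨b ++ C', by rw [h, List.append_assoc]⟩
    · exact ⟨w ++ C, (List.append_assoc ..).symm⟩
  obtain ⟨l, rfl⟩ := hA
  have hb : l ++ w ++ C = b ++ C' := by
    simpa only [List.append_assoc, List.append_cancel_left_eq] using h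
  have hprefix : l ++ w <+: b :=
    List.prefix_of_prefix_length_le ⟨C, hb⟩ (List.prefix_append b C')
      (by rw [List.length_append] at hlen ⊢; omega)
  exact (List.infix_append' l w []).trans (by simpa using hprefix.isInfix)

/-- The word obtained by cutting `a` at position `n` and inserting the marker `b` there, where
each of the three pieces `u` is replaced by its padded version `P u ++ u ++ S u`, and `c` is
appended. -/
def insertMarker (P S : List α → List α) (b c : List α) (n : ℕ) (a : List α) : List α :=
  P (a.take n) ++ a.take n ++ S (a.take n) ++ (P b ++ b ++ S b) ++
    (P (a.drop n) ++ a.drop n ++ S (a.drop n)) ++ c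

variable {P S : List α → List α} {lP lS : ℕ} {a a' c : List α} {n n' : ℕ}

theorem length_insertMarker (hP : ∀ u, (P u).length = lP) (hS : ∀ u, (S u).length = lS)
    (b c : List α) (n : ℕ) (a : List α) : (insertMarker P S b c n a).length
      = a.length + (b.length + 3 * (lP + lS) + c.length) := by
  simp only [insertMarker, List.length_append, hP, hS, List.length_take, List.length_drop]
  omega

theorem infix_of_insertMarker_eq (hP : ∀ u, (P u).length = lP) (hS : ∀ u, (S u).length = lS)
    (ha : n ≤ a.length) (ha' : n' ≤ a'.length) (hn : n + (lP + lS + b.length) ≤ n')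
    (h : insertMarker P S b c n a = insertMarker P S b c n' a') : b <:+: a' := by
  have hinfix : b <:+: a'.take n' := by
    simp only [insertMarker, List.append_assoc] at h
    refine infix_of_append_eq (A := P (a.take n) ++ a.take n ++ S (a.take n) ++ P b)
      (A' := P (a'.take n')) (by simpa only [List.append_assoc] using h) ?_ ?_
    all_goals simp only [List.length_append, hP, hS, List.length_take]; omega
  exact hinfix.trans (List.take_prefix n' a').isInfix

theorem eq_of_insertMarker_eq (hP : ∀ u, (P u).length = lP) (hlen : a.length = a'.length)
    (h : insertMarker P S b c n a = insertMarker P S b c n a') : a = a' := by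
  have htake : (a.take n).length = (a'.take n).length := by simp only [List.length_take, hlen]
  have hdrop : (a.drop n).length = (a'.drop n).length := by simp only [List.length_drop, hlen]
  simp only [insertMarker, List.append_assoc] at h
  obtain ⟨htake_eq, hrest⟩ := List.append_inj
    (List.append_inj h ((hP _).trans (hP _).symm)).2 htake
  rw [htake_eq] at hrest
  simp only [List.append_cancel_left_eq] at hrest
  have hdrop_eq := (List.append_inj
    (List.append_inj hrest ((hP _).trans (hP _).symm)).2 hdrop).1
  rw [← List.take_append_drop n a, ← List.take_append_drop n a', htake_eq, hdrop_eq]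

theorem injective_insertMarker {W : Set (List α)} {k q ℓ : ℕ} (hP : ∀ u, (P u).length = lP)
    (hS : ∀ u, (S u).length = lS) (hq : lP + lS + b.length ≤ q) (hℓ : q * k ≤ ℓ)
    (hW : ∀ a ∈ W, a.length = ℓ) (hb : ∀ a ∈ W, ¬ b <:+: a) (c : List α) :
    Function.Injective fun z : Fin k × W => insertMarker P S b c (q * z.1) z.2 := by
  have hcut : ∀ (i : Fin k) (a : W), q * (i : ℕ) ≤ (a : List α).length := fun i a =>
    (hW a a.2).symm ▸ (Nat.mul_le_mul_left q i.2.le).trans hℓ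
  have hge : ∀ z z' : Fin k × W, insertMarker P S b c (q * z.1) (z.2 : List α)
      = insertMarker P S b c (q * z'.1) z'.2 → z'.1 ≤ z.1 := by
    intro z z' h
    by_contra! hlt
    have hgap : q * z.1 + q ≤ q * (z'.1 : ℕ) := Nat.mul_le_mul_left q (Nat.succ_le_of_lt hlt)
    exact hb _ z'.2.2 (infix_of_insertMarker_eq hP hS (hcut _ _) (hcut _ _) (by omega) h)
  rintro ⟨i, a⟩ ⟨i', a'⟩ h
  obtain rfl : i = i' := le_antisymm (hge _ _ h.symm) (hge _ _ h)
  exact Prod.ext rfl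
    (Subtype.ext (eq_of_insertMarker_eq hP ((hW a a.2).trans (hW a' a'.2).symm) h))

end MarkedWords

section StrictDecrease

variable {β t ts t' ε x y : ℝ} {m N : ℕ}

theorem exists_not_infix_greedyWord (hβ : 1 < β) (hx : x ∈ Ico (0 : ℝ) 1) (hxt : x < t) :
    ∃ k, ∀ n, ∀ a ∈ survivorWords β t n, ¬ greedyWord β k x <:+: a := by
  obtain ⟨k, hk⟩ := exists_pow_lt_of_lt_one (sub_pos.2 hxt) (div_lt_one (one_pos.trans hβ) |>.2 hβ)
  refine ⟨k, ?_⟩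
  rintro n _ ⟨y, hy, rfl⟩ hinfix
  obtain ⟨i, hi⟩ := exists_eq_greedyWord_of_infix hinfix
  rw [length_greedyWord] at hi
  have hyi := iterate_Tbeta_mem_Kset hy i
  have hclose := abs_sub_lt_of_greedyWord_eq (one_pos.trans hβ) hx hyi.1 hi
  rw [one_div_pow] at hk
  linarith [(Kset_subset_Ico hyi).1, neg_abs_le (x - (Tbeta β)^[i] y)]

theorem AnchorParams.exists_wraps (h : AnchorParams β m t ε N) :
    ∃ (P S : List ℕ → List ℕ) (lP lS : ℕ), (∀ a, (P a).length = lP) ∧ (∀ a, (S a).length = lS) ∧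
      ∀ n, ∀ x ∈ Kset β (t + ε), AdmMapsTo β t
        (P (greedyWord β n x) ++ greedyWord β n x ++ S (greedyWord β n x)) (anchor β ε)
        (anchor β ε) := by
  have hwrap : ∀ a, ∃ P S : List ℕ, P.length = m * (N * (m + 1) + m) + (N * (m + 1) + (m + 1)) ∧
      S.length = m * (N * (m + 1) + m) + m ∧ ((∃ n, ∃ x ∈ Kset β (t + ε), greedyWord β n x = a) →
        AdmMapsTo β t (P ++ a ++ S) (anchor β ε) (anchor β ε)) := by
    intro a
    by_cases ha : ∃ n, ∃ x ∈ Kset β (t + ε), greedyWord β n x = a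
    · obtain ⟨n, x, hx, rfl⟩ := ha
      obtain ⟨P, S, hP, hS, hPS⟩ := h.exists_wrap n hx
      exact ⟨P, S, hP, hS, fun _ => hPS⟩
    · exact ⟨List.replicate _ 0, List.replicate _ 0, List.length_replicate, List.length_replicate,
        fun h => absurd h ha⟩
  choose P S hP hS hPS using hwrap
  exact ⟨P, S, _, _, hP, hS, fun n x hx => hPS _ ⟨n, x, hx, rfl⟩⟩

theorem AnchorParams.exists_mul_card_le_dimH (h : AnchorParams β m t ε N) (ht : 0 < t)
    (hy : y ∈ Kset β (t + ε)) (hyt : y < t') : ∃ q c₀ : ℕ, 0 < c₀ ∧ ∀ k,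
      ENNReal.ofReal (Real.logb (β ^ (q * k + c₀)) (k * (survivorWords β t' (q * k)).ncard))
        ≤ dimH (Kset β t) := by
  obtain ⟨l, hl⟩ := exists_not_infix_greedyWord h.one_lt hy.1 hyt
  obtain ⟨P, S, lP, lS, hP, hS, hPS⟩ := h.exists_wraps
  have hsub : Kset β t' ⊆ Kset β (t + ε) :=
    Kset_antitone β ((Kset_subset_Ico hy).1.trans hyt.le)
  set b := greedyWord β l y
  set c := connector m N (m - 1) with hc
  have hc₀ : 0 < b.length + 3 * (lP + lS) + c.length := by
    rw [hc, length_connector]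
    omega
  refine ⟨lP + lS + b.length, b.length + 3 * (lP + lS) + c.length, hc₀, fun k => ?_⟩
  set q := lP + lS + b.length
  set W := survivorWords β t' (q * k)
  have hWlen : ∀ a ∈ W, a.length = q * k := fun a ha => length_of_mem_survivorWords ha
  have : Finite W := finite_survivorWords ⟨h.pos.le, h.lt_two.le⟩ t' (q * k)
  have hmaps : ∀ z : Fin k × W, AdmMapsTo β t (insertMarker P S b c (q * z.1) z.2)
      (Icc (1 / β - ε) (1 / β)) (Icc (1 / β - ε) (1 / β)) := by
    rintro ⟨i, _, x, hx, rfl⟩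
    obtain ⟨r, hr⟩ := Nat.exists_eq_add_of_le (Nat.mul_le_mul_left q i.2.le)
    dsimp only
    rw [insertMarker, hr, greedyWord_add, List.take_left' (length_greedyWord ..),
      List.drop_left' (length_greedyWord ..)]
    exact ((((hPS _ x (hsub hx)).append (hPS l y hy)).append
      (hPS r _ (iterate_Tbeta_mem_Kset (hsub hx) _))).append h.admMapsTo_connector_pred).mono
        subset_rfl Ico_subset_Icc_self
  have hle := ofReal_logb_card_le_dimH_Kset h.one_lt ht (Nat.add_pos_right _ hc₀).ne'
    (fun z : Fin k × W => (length_insertMarker hP hS b c _ _).trans (by rw [hWlen _ z.2.2]))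
    (injective_insertMarker hP hS le_rfl le_rfl hWlen (hl _) c) isCompact_Icc.isComplete
    (nonempty_Icc.2 (sub_le_self _ h.pos_gap.le))
    (Icc_subset_Ico_right h.one_div_lt_one |>.trans (Ico_subset_Ico_left h.le_one_div_sub)) hmaps
  rwa [Nat.card_prod, Nat.card_fin, Nat.card_coe_set_eq, Nat.cast_mul] at hle

theorem dimH_Kset_lt_of_forall_le {d : ENNReal} {q c₀ : ℕ} (hβ : β ∈ Ioc (1 : ℝ) 2)
    (hne : (Kset β t).Nonempty) (hc₀ : 0 < c₀)
    (h : ∀ k : ℕ, ENNReal.ofReal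
      (Real.logb (β ^ (q * k + c₀)) (k * (survivorWords β t (q * k)).ncard)) ≤ d) :
    dimH (Kset β t) < d := by
  set D := (dimH (Kset β t)).toReal
  obtain ⟨k, hk, hklog⟩ : ∃ k : ℕ, 0 < k ∧ c₀ * (D * Real.log β) < Real.log k :=
    ((eventually_gt_atTop 0).and ((Real.tendsto_log_atTop.comp
      tendsto_natCast_atTop_atTop).eventually_gt_atTop _)).exists
  have hWpos : 0 < (survivorWords β t (q * k)).ncard :=
    (ncard_pos (finite_survivorWords ⟨zero_le_one.trans hβ.1.le, hβ.2⟩ t _)).2 (hne.image _)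
  have hupper := mul_dimH_Kset_le_log_ncard hβ t (q * k)
  have hL : 0 < Real.log (β ^ (q * k + c₀)) :=
    Real.log_pos (one_lt_pow₀ hβ.1 (Nat.add_pos_right _ hc₀).ne')
  have hlt : D < Real.logb (β ^ (q * k + c₀)) (k * (survivorWords β t (q * k)).ncard) := by
    rw [← Real.log_div_log, lt_div_iff₀ hL, Real.log_mul (Nat.cast_ne_zero.2 hk.ne')
      (Nat.cast_ne_zero.2 hWpos.ne'), Real.log_pow, Nat.cast_add]
    linarith
  refine lt_of_lt_of_le ?_ (h k)
  rwa [ENNReal.lt_ofReal_iff_toReal_lt (Real.dimH_ne_top _)]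

theorem dimH_Kset_lt_of_mem_Kset (h : IsMultinacciOrder β m) (ht : 0 < t) (htβ : t < 1 - 1 / β)
    (hts : t < ts) (hx : x ∈ Kset β ts) (hxt : x < t') (hne : (Kset β t').Nonempty) :
    dimH (Kset β t') < dimH (Kset β t) := by
  obtain ⟨N, hN⟩ := exists_anchorParams h ht.le (sub_pos.2 (lt_min hts htβ))
    (by rw [add_sub_cancel]; exact min_le_right _ _)
  obtain ⟨q, c₀, hc₀, hle⟩ := hN.exists_mul_card_le_dimH ht
    (Kset_antitone β (by rw [add_sub_cancel]; exact min_le_left _ _) hx) hxt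
  exact dimH_Kset_lt_of_forall_le ⟨h.one_lt, h.lt_two.le⟩ hne hc₀ hle

theorem Kset_nonempty (h : IsMultinacciOrder β m) (ht : 0 ≤ t) (htβ : t < 1 - 1 / β) :
    (Kset β t).Nonempty := by
  obtain ⟨N, hN⟩ := exists_anchorParams h ht (sub_pos.2 htβ) (add_sub_cancel _ _).le
  obtain ⟨g, hg⟩ := exists_coding_Kset (X := fun _ : Unit => connector m N (m - 1)) h.one_lt ht
    (by simp [length_connector]) (fun _ => rfl) isCompact_Icc.isComplete
    (nonempty_Icc.2 (sub_le_self _ hN.pos_gap.le))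
    (Icc_subset_Ico_right h.one_div_lt_one |>.trans (Ico_subset_Ico_left hN.le_one_div_sub))
    fun _ => hN.admMapsTo_connector_pred.mono subset_rfl Ico_subset_Icc_self
  exact ⟨_, (hg fun _ => ()).2.1⟩

end StrictDecrease

section Tails

variable {β : ℝ} {a b d e : ℕ → ℕ} {u v : ℕ → ℝ} {s : List ℕ} {n : ℕ}

/-- `u n` is the value in base `β` of the sequence of digits `a` from position `n` on, expressed
by the recursion between consecutive tails. -/
def HasTails (β : ℝ) (a : ℕ → ℕ) (u : ℕ → ℝ) : Prop := ∀ n, β * u n = a n + u (n + 1)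

theorem HasTails.shiftN (h : HasTails β a u) (j : ℕ) :
    HasTails β (shiftN j a) fun n => u (n + j) := fun n => by
  have hn := h (n + j)
  rwa [Nat.add_right_comm] at hn

theorem HasTails.sum_range (hβ : β ≠ 0) (h : HasTails β a u) (n : ℕ) :
    ∑ i ∈ Finset.range n, (a i : ℝ) / β ^ (i + 1) = u 0 - u n / β ^ n := by
  induction n with
  | zero => simp
  | succ n ih =>
    rw [Finset.sum_range_succ, ih, ← mul_div_mul_left (u n) _ hβ, ← pow_succ', h n, add_div]
    ring

theorem HasTails.hasSum {C : ℝ} (hβ : 1 < β) (h : HasTails β a u) (hu : ∀ n, u n ∈ Icc 0 C) :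
    HasSum (fun i => (a i : ℝ) / β ^ (i + 1)) (u 0) := by
  have hβ0 : 0 < β := one_pos.trans hβ
  rw [hasSum_iff_tendsto_nat_of_nonneg fun i => by positivity]
  simp only [h.sum_range hβ0.ne']
  have hpow : Tendsto (fun n : ℕ => C / β ^ n) atTop (nhds 0) :=
    (tendsto_pow_atTop_atTop_of_one_lt hβ).const_div_atTop C
  have htail : Tendsto (fun n => u n / β ^ n) atTop (nhds 0) :=
    squeeze_zero (fun n => div_nonneg (hu n).1 (pow_pos hβ0 n).le)
      (fun n => div_le_div_of_nonneg_right (hu n).2 (pow_pos hβ0 n).le) hpow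
  simpa only [sub_zero] using htail.const_sub (u 0)

theorem seqLt_or_seqLt_of_ne (h : a ≠ b) : seqLt a b ∨ seqLt b a := by
  classical
  have hex := Function.ne_iff.1 h
  have hmin : ∀ i < Nat.find hex, a i = b i := fun i hi => not_not.1 (Nat.find_min hex hi)
  exact (Nat.find_spec hex).lt_or_gt.imp (fun hlt => ⟨_, hmin, hlt⟩)
    fun hlt => ⟨_, fun i hi => (hmin i hi).symm, hlt⟩

theorem HasTails.one_lt_tsum_of_seqLt (hβ : 0 < β) (hd : HasTails β d u) (hu0 : u 0 = 1)
    (hu : ∀ n, u n ≤ 1) (he : ¬ ∃ N, ∀ n, N ≤ n → e n = 0)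
    (hsum : Summable fun i => (e i : ℝ) / β ^ (i + 1)) (hlt : seqLt d e) :
    1 < ∑' i, (e i : ℝ) / β ^ (i + 1) := by
  obtain ⟨n, heq, hn⟩ := hlt
  push Not at he
  obtain ⟨M, hM, heM⟩ := he (n + 1)
  have hprefix : 1 ≤ ∑ i ∈ Finset.range (n + 1), (e i : ℝ) / β ^ (i + 1) := by
    have hdigit : (d n : ℝ) + 1 ≤ e n := mod_cast hn
    have hpow := pow_pos hβ (n + 1)
    calc (1 : ℝ) ≤ 1 + (1 - u (n + 1)) / β ^ (n + 1) :=
          le_add_of_nonneg_right (div_nonneg (sub_nonneg.2 (hu _)) hpow.le)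
      _ = ∑ i ∈ Finset.range n, (d i : ℝ) / β ^ (i + 1) + (d n + 1) / β ^ (n + 1) := by
          rw [hd.sum_range hβ.ne', hu0, ← mul_div_mul_left (u n) _ hβ.ne', ← pow_succ', hd n]
          ring
      _ ≤ _ := by
          rw [Finset.sum_range_succ,
            Finset.sum_congr rfl fun i hi => by rw [heq i (Finset.mem_range.1 hi)]]
          gcongr
  refine hprefix.trans_lt (lt_of_lt_of_le ?_
    (hsum.sum_le_tsum (Finset.range (M + 1)) fun i _ => by positivity))
  refine Finset.sum_lt_sum_of_subset (Finset.range_mono (by omega)) (Finset.self_mem_range_succ M)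
    (by simpa using hM) (div_pos (Nat.cast_pos.2 (Nat.pos_of_ne_zero heM)) (pow_pos hβ _))
    fun i _ _ => by positivity

theorem isQuasiGreedy_of_hasTails (hβ : β ∈ Ioc (1 : ℝ) 2) (hd : HasTails β d u) (hu0 : u 0 = 1)
    (hu : ∀ n, u n ∈ Ioc 0 1) : IsQuasiGreedy β d := by
  have hβ0 : 0 < β := one_pos.trans hβ.1
  refine ⟨fun n => ?_, ?_, hu0 ▸ (hd.hasSum hβ.1 fun n => Ioc_subset_Icc_self (hu n)).tsum_eq,
    fun e _ he hesum => ?_⟩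
  · have hlt : (d n : ℝ) < (2 : ℕ) := by
      push_cast
      nlinarith [hd n, (hu n).1, (hu n).2, (hu (n + 1)).1, hβ.2]
    exact Nat.le_of_lt_succ (Nat.cast_lt.1 hlt)
  · rintro ⟨N, hN⟩
    have hgrow : ∀ k, u (N + k) = β ^ k * u N := by
      intro k
      induction k with
      | zero => simp
      | succ k ih =>
        have := hd (N + k)
        rw [hN _ (Nat.le_add_right N k), Nat.cast_zero, zero_add, ih] at this
        rw [← Nat.add_assoc, ← this, pow_succ', mul_assoc]
    obtain ⟨k, hk⟩ := pow_unbounded_of_one_lt (1 / u N) hβ.1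
    rw [div_lt_iff₀ (hu N).1, ← hgrow] at hk
    exact hk.not_ge (hu _).2
  · refine or_iff_not_imp_left.2 fun hne => (seqLt_or_seqLt_of_ne hne).resolve_right fun hlt => ?_
    have hsum : Summable fun i => (e i : ℝ) / β ^ (i + 1) := by
      by_contra h
      exact zero_ne_one ((tsum_eq_zero_of_not_summable h).symm.trans hesum)
    exact (hd.one_lt_tsum_of_seqLt hβ0 hu0 (fun n => (hu n).2) he hsum hlt).ne' hesum

theorem HasTails.lt_one_of_seqLt (hβ : 1 ≤ β) (ha : HasTails β a u) (hb : HasTails β b v)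
    (hv0 : v 0 = 1) (hv : ∀ n, 0 < v n) (hu : ∀ n, u n ≤ u 0) (hlt : seqLt a b) : u 0 < 1 := by
  have hβ0 : 0 < β := one_pos.trans_le hβ
  obtain ⟨n, heq, hn⟩ := hlt
  have hdigit : (a n : ℝ) + 1 ≤ b n := mod_cast hn
  have hsum : u 0 - u n / β ^ n = v 0 - v n / β ^ n := by
    rw [← ha.sum_range hβ0.ne', ← hb.sum_range hβ0.ne']
    exact Finset.sum_congr rfl fun i hi => by rw [heq i (Finset.mem_range.1 hi)]
  have hdiff : (u 0 - 1) * β ^ (n + 1) = β * u n - β * v n := by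
    rw [← hv0, pow_succ]
    field_simp at hsum
    linear_combination β * hsum
  by_contra! hge
  nlinarith [ha n, hb n, hu (n + 1), hv (n + 1),
    le_mul_of_one_le_right (sub_nonneg.2 hge) (one_le_pow₀ hβ (n := n + 1))]

theorem hasTails_perSeq {r : ℝ} (hβ : β ≠ 0) (hs : s ≠ []) (hr : wordEval β s r = r) :
    HasTails β (perSeq s) fun n => wordEval β (s.drop (n % s.length)) r := fun n => by
  have hn := Nat.mod_lt n (List.length_pos_iff.2 hs)
  have hsucc : wordEval β (s.drop ((n + 1) % s.length)) r
      = wordEval β (s.drop (n % s.length + 1)) r := by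
    rw [← Nat.mod_add_mod]
    rcases (Nat.add_one_le_iff.2 hn).lt_or_eq with hlt | heq
    · rw [Nat.mod_eq_of_lt hlt]
    · rw [heq, Nat.mod_self, List.drop_zero, List.drop_length, hr, wordEval]
  dsimp only
  rw [hsucc, List.drop_eq_getElem_cons hn, wordEval, perSeq, List.getD_eq_getElem _ _ hn,
    mul_div_cancel₀ _ hβ]

theorem exists_hasTails_one {m : ℕ} (h : IsMultinacciOrder β m) :
    ∃ d u, HasTails β d u ∧ u 0 = 1 ∧ ∀ n, u n ∈ Ioc 0 1 := by
  have hvalue : ∀ i ≤ m, wordEval β ((List.replicate m 1 ++ [0]).drop i) 1 = oneOrbit β i := by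
    intro i hi
    rw [List.drop_append_of_le_length (by rwa [List.length_replicate]), List.drop_replicate,
      wordEval_append, wordEval, wordEval, Nat.cast_zero, zero_add, ← h.oneOrbit_order,
      ← wordEval_ones_oneOrbit h.pos.ne' i (m - i), Nat.add_sub_of_le hi]
  have hfix : wordEval β (List.replicate m 1 ++ [0]) 1 = 1 := hvalue 0 m.zero_le
  refine ⟨_, _, hasTails_perSeq h.pos.ne' (by simp) hfix, hvalue _ (by simp), fun n => ?_⟩
  have hn : n % (List.replicate m 1 ++ [0]).length ≤ m :=
    Nat.le_of_lt_succ (by simpa using Nat.mod_lt n m.succ_pos)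
  rw [hvalue _ hn]
  exact ⟨(one_div_pos.2 h.pos).trans_le (h.one_div_le_oneOrbit hn), oneOrbit_le_one h.mem_Ioo _⟩

end Tails

section LyndonIntervals

variable {β t r v x : ℝ} {m i : ℕ} {s w w' : List ℕ}

theorem lyndonLeft_eq_wordEval (β : ℝ) (s : List ℕ) : lyndonLeft β s = wordEval β s 0 := by
  induction s with
  | nil => simp [lyndonLeft, wordEval]
  | cons a s ih =>
    rw [wordEval, ← ih, lyndonLeft, lyndonLeft, List.length_cons, Finset.sum_range_succ', add_div,
      Finset.sum_div, add_comm]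
    simp only [List.getD_cons_succ, List.getD_cons_zero, zero_add, pow_one, div_div, ← pow_succ]

theorem wordEval_lyndonRight (hβ : 1 < β) (hs : s ≠ []) :
    wordEval β s (lyndonRight β s) = lyndonRight β s := by
  have hpow : 1 < β ^ s.length := one_lt_pow₀ hβ (List.length_pos_iff.2 hs).ne'
  have hsub := wordEval_sub β s (lyndonRight β s) 0
  rw [← lyndonLeft_eq_wordEval, sub_zero, sub_eq_iff_eq_add] at hsub
  have hne : β ^ s.length - 1 ≠ 0 := (sub_pos.2 hpow).ne'
  rw [hsub, lyndonRight]
  field_simp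
  ring

theorem lyndonLeft_nonneg (hβ : 0 < β) (s : List ℕ) : 0 ≤ lyndonLeft β s :=
  lyndonLeft_eq_wordEval β s ▸ wordEval_nonneg hβ s le_rfl

theorem lyndonRight_nonneg (hβ : 1 ≤ β) (s : List ℕ) : 0 ≤ lyndonRight β s :=
  mul_nonneg (div_nonneg (by positivity) (sub_nonneg.2 (one_le_pow₀ hβ)))
    (lyndonLeft_nonneg (one_pos.trans_le hβ) s)

theorem lyndonLeft_le_lyndonRight (hβ : 1 < β) (hs : s ≠ []) :
    lyndonLeft β s ≤ lyndonRight β s := by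
  rw [lyndonLeft_eq_wordEval, ← wordEval_lyndonRight hβ hs]
  exact (wordEval_strictMono (one_pos.trans hβ) s).monotone (lyndonRight_nonneg hβ.le s)

theorem admissible_iff_forall_drop :
    Admissible β t w v ↔ ∀ i < w.length, wordEval β (w.drop i) v ∈ Ico t 1 := by
  induction w with
  | nil => simp [Admissible]
  | cons d w ih =>
    rw [Admissible, ih, List.length_cons, Nat.forall_lt_succ_left]
    simp only [List.drop_zero, List.drop_succ_cons]

theorem wordEval_le_of_seqLt (hβ : 0 < β) (hv : 0 ≤ v) (hlen : w.length = w'.length)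
    (hlt : seqLt (wordSeq w) (wordSeq w')) (hw : ∀ j, wordEval β (w.drop j) r ≤ 1) :
    wordEval β w r ≤ wordEval β w' v := by
  induction w generalizing w' with
  | nil =>
    rw [List.length_eq_zero_iff.1 hlen.symm] at hlt
    exact absurd hlt fun ⟨n, _, hn⟩ => hn.false
  | cons d w ih =>
    cases w' with
    | nil => simp at hlen
    | cons d' w' =>
      simp only [wordEval]
      gcongr ?_ / _
      obtain ⟨_ | n, heq, hn⟩ := hlt
      · have hd : (d : ℝ) + 1 ≤ d' := mod_cast hn
        have hw1 : wordEval β w r ≤ 1 := hw 1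
        linarith [wordEval_nonneg hβ w' hv]
      · obtain rfl : d = d' := heq 0 n.succ_pos
        gcongr
        exact ih (Nat.succ_injective hlen) ⟨n, fun i hi => heq (i + 1) (Nat.succ_lt_succ hi), hn⟩
          fun j => hw (j + 1)

theorem wordEval_append_zero (β : ℝ) (w : List ℕ) (v : ℝ) :
    wordEval β (w ++ [0]) v = wordEval β (w ++ [1]) (v - 1) := by
  simp only [wordEval_append, wordEval, Nat.cast_zero, Nat.cast_one, zero_add, add_sub_cancel]

theorem AnchorParams.exists_mem_Kset_near_one {ε : ℝ} {N : ℕ} (h : AnchorParams β m t ε N)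
    (hx : x ∈ Kset β t) (hxβ : x < 1 / β) : ∃ v ∈ Kset β t, v ∈ Ico (1 - ε) 1 := by
  have hmaps := ((h.admMapsTo_ones_anchor m.zero_le).append h.admMapsTo_fullBlocks) x
    ⟨hx.2 0, hxβ⟩
  exact ⟨_, hmaps.1.wordEval_mem_Kset h.pos.ne' h.nonneg hx, hmaps.2⟩

namespace IsBetaLyndon

theorem wordEval_drop_lt_one (hs : IsBetaLyndon β s) (h : IsMultinacciOrder β m) (i : ℕ) :
    wordEval β (s.drop i) (lyndonRight β s) < 1 := by
  have hpos : 0 < s.length := List.length_pos_iff.2 hs.1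
  have hfix := wordEval_lyndonRight h.one_lt hs.1
  have htails := hasTails_perSeq h.pos.ne' hs.1 hfix
  have : Nonempty (Fin s.length) := ⟨⟨0, hpos⟩⟩
  obtain ⟨j, hj⟩ := Finite.exists_max fun j : Fin s.length =>
    wordEval β (s.drop j) (lyndonRight β s)
  have hmod : ∀ n, wordEval β (s.drop (n % s.length)) (lyndonRight β s)
      ≤ wordEval β (s.drop ((0 + j) % s.length)) (lyndonRight β s) := fun n => by
    rw [Nat.zero_add, Nat.mod_eq_of_lt j.2]
    exact hj ⟨n % s.length, Nat.mod_lt n hpos⟩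
  obtain ⟨d, u, hd, hu0, hu⟩ := exists_hasTails_one h
  have hquasi := isQuasiGreedy_of_hasTails ⟨h.one_lt, h.lt_two.le⟩ hd hu0 hu
  have hlt := (htails.shiftN j).lt_one_of_seqLt h.one_lt.le hd hu0 (fun n => (hu n).1)
    (fun n => hmod (n + j)) (hs.2.2.2 d hquasi j)
  rcases lt_or_ge i s.length with hi | hi
  · exact Nat.mod_eq_of_lt hi ▸ (hmod i).trans_lt hlt
  · rw [List.drop_eq_nil_of_le hi, wordEval, ← hfix]
    exact (Nat.zero_mod s.length ▸ hmod 0).trans_lt hlt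

theorem lyndonRight_lt_one (hs : IsBetaLyndon β s) (h : IsMultinacciOrder β m) :
    lyndonRight β s < 1 := by
  simpa only [List.drop_zero, wordEval_lyndonRight h.one_lt hs.1] using hs.wordEval_drop_lt_one h 0

theorem lyndonRight_le_wordEval_drop (hs : IsBetaLyndon β s) (h : IsMultinacciOrder β m)
    (hi : 1 ≤ i) (his : i < s.length) (hv : 0 ≤ v) :
    lyndonRight β s ≤ wordEval β (s.drop i) v := by
  set n := s.length - i
  have hdrop : ∀ j, (s.take n).drop j ++ s.drop n = s.drop (min j n) := by
    intro j
    rcases le_total j n with hj | hj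
    · rw [min_eq_left hj, ← List.drop_append_of_le_length (by rw [List.length_take]; omega),
        List.take_append_drop]
    · rw [min_eq_right hj, List.drop_eq_nil_of_le ((List.length_take_le n s).trans hj),
        List.nil_append]
  have hle := wordEval_le_of_seqLt (r := wordEval β (s.drop n) (lyndonRight β s)) h.pos hv
    (by rw [List.length_take, List.length_drop]; omega) (hs.2.2.1 i hi his) fun j => by
      rw [← wordEval_append, hdrop]
      exact (hs.wordEval_drop_lt_one h _).le
  rwa [← wordEval_append, List.take_append_drop, wordEval_lyndonRight h.one_lt hs.1] at hle

theorem admissible_lyndonRight (hs : IsBetaLyndon β s) (h : IsMultinacciOrder β m) :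
    Admissible β (lyndonRight β s) s (lyndonRight β s) := by
  refine admissible_iff_forall_drop.2 fun i hi => ⟨?_, hs.wordEval_drop_lt_one h i⟩
  rcases Nat.eq_zero_or_pos i with rfl | hi0
  · exact (wordEval_lyndonRight h.one_lt hs.1).ge
  · exact hs.lyndonRight_le_wordEval_drop h hi0 hi (lyndonRight_nonneg h.one_lt.le s)

theorem lyndonRight_mem_Kset (hs : IsBetaLyndon β s) (h : IsMultinacciOrder β m) :
    lyndonRight β s ∈ Kset β (lyndonRight β s) := by
  refine subset_Kset_of_forall_exists_wordEval (S := {lyndonRight β s}) h.pos.ne'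
    (lyndonRight_nonneg h.one_lt.le s)
    (singleton_subset_iff.2 ⟨le_rfl, hs.lyndonRight_lt_one h⟩) ?_ rfl
  rintro _ rfl
  exact ⟨s, hs.1, _, rfl, hs.admissible_lyndonRight h, (wordEval_lyndonRight h.one_lt hs.1).symm⟩

theorem lyndonRight_sub_iterate_Tbeta (hs : IsBetaLyndon β s) (h : IsMultinacciOrder β m)
    (hx : x ∈ Ico (lyndonLeft β s) (lyndonRight β s)) :
    (Tbeta β)^[s.length] x < lyndonRight β s ∧
      lyndonRight β s - (Tbeta β)^[s.length] x = β ^ s.length * (lyndonRight β s - x) := by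
  have hpow := pow_pos h.pos s.length
  set v := β ^ s.length * (x - lyndonLeft β s) with hv
  have hv0 : 0 ≤ v := mul_nonneg hpow.le (sub_nonneg.2 hx.1)
  have hxv : wordEval β s v = x := by
    have hsub := wordEval_sub β s v 0
    rwa [← lyndonLeft_eq_wordEval, sub_zero, hv, mul_div_cancel_left₀ _ hpow.ne',
      sub_left_inj] at hsub
  have hgap : lyndonRight β s - v = β ^ s.length * (lyndonRight β s - x) := by
    have hsub := wordEval_sub β s (lyndonRight β s) v
    rw [hxv, wordEval_lyndonRight h.one_lt hs.1] at hsub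
    rw [hsub, mul_div_cancel₀ _ hpow.ne']
  have hvR : v < lyndonRight β s := by
    rw [← sub_pos, hgap]
    exact mul_pos hpow (sub_pos.2 hx.2)
  have hadm : Admissible β 0 s v := admissible_iff_forall_drop.2 fun i _ =>
    ⟨wordEval_nonneg h.pos _ hv0,
      (wordEval_strictMono h.pos _ hvR).trans (hs.wordEval_drop_lt_one h i)⟩
  have horbit := hadm.iterate_Tbeta h.pos.ne' le_rfl ⟨hv0, hvR.trans (hs.lyndonRight_lt_one h)⟩
  rw [hxv] at horbit
  exact ⟨horbit ▸ hvR, horbit ▸ hgap⟩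

theorem lyndonRight_le_of_mem_Kset (hs : IsBetaLyndon β s) (h : IsMultinacciOrder β m)
    (hx : x ∈ Kset β (lyndonLeft β s)) : lyndonRight β s ≤ x := by
  by_contra! hlt
  have hbound : ∀ k, ∀ y ∈ Kset β (lyndonLeft β s), y < lyndonRight β s →
      (β ^ s.length) ^ k * (lyndonRight β s - y) ≤ lyndonRight β s := by
    intro k
    induction k with
    | zero =>
      intro y hy _
      rw [pow_zero, one_mul]
      exact sub_le_self _ hy.1.1
    | succ k ih =>
      intro y hy hyR
      obtain ⟨hlt, heq⟩ := hs.lyndonRight_sub_iterate_Tbeta h ⟨(Kset_subset_Ico hy).1, hyR⟩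
      have hle := ih _ (iterate_Tbeta_mem_Kset hy _) hlt
      rwa [heq, ← mul_assoc, ← pow_succ] at hle
  obtain ⟨k, hk⟩ := pow_unbounded_of_one_lt (lyndonRight β s / (lyndonRight β s - x))
    (one_lt_pow₀ h.one_lt (List.length_pos_iff.2 hs.1).ne')
  rw [div_lt_iff₀ (sub_pos.2 hlt)] at hk
  exact hk.not_ge (hbound k x hx hlt)

theorem Kset_lyndonLeft (hs : IsBetaLyndon β s) (h : IsMultinacciOrder β m) :
    Kset β (lyndonLeft β s) = Kset β (lyndonRight β s) :=
  Subset.antisymm (fun _ hx =>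
    ⟨hx.1, fun n => hs.lyndonRight_le_of_mem_Kset h (iterate_Tbeta_mem_Kset hx n)⟩)
    (Kset_antitone β (lyndonLeft_le_lyndonRight h.one_lt hs.1))

theorem lyndonRight_ne_one_sub_one_div (hs : IsBetaLyndon β s) (h : IsMultinacciOrder β m)
    (hR : 0 < lyndonRight β s) : lyndonRight β s ≠ 1 - 1 / β := by
  intro heq
  have hvalue : wordEval β (fullBlock m) 0 = lyndonRight β s := by
    rw [heq, fullBlock, wordEval, wordEval_ones h.pos.ne' 1, Nat.add_comm 1 m, h.oneOrbit_succ,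
      sub_zero, zero_div, sub_zero, oneOrbit, oneOrbit, mul_one, Nat.cast_zero, zero_add, sub_div,
      div_self h.pos.ne']
  have horbit := (admMapsTo_fullBlock h 0 0 ⟨le_rfl, one_div_pos.2 h.pos⟩).1.iterate_Tbeta
    h.pos.ne' le_rfl ⟨le_rfl, one_pos⟩
  rw [hvalue] at horbit
  exact hR.not_ge (horbit ▸ (hs.lyndonRight_mem_Kset h).2 _)

theorem exists_eq_append_one (hs : IsBetaLyndon β s) (h : IsMultinacciOrder β m)
    (hR : 0 < lyndonRight β s) : ∃ s', s = s' ++ [1] := by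
  obtain ⟨s', c, rfl⟩ := (List.eq_nil_or_concat s).resolve_left hs.1
  rw [List.concat_eq_append] at *
  have hc : c ≤ 1 := hs.2.1 c (by simp)
  rcases Nat.le_one_iff_eq_zero_or_eq_one.1 hc with rfl | rfl
  · exfalso
    have hzero : wordEval β ((s' ++ [0]).drop s'.length) 0 = 0 := by simp [wordEval]
    rcases Nat.eq_zero_or_pos s'.length with hlen | hlen
    · rw [hlen, List.drop_zero, ← lyndonLeft_eq_wordEval] at hzero
      rw [lyndonRight, hzero, mul_zero] at hR
      exact hR.false
    · exact hR.not_ge (hzero ▸ hs.lyndonRight_le_wordEval_drop h hlen (by simp) le_rfl)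
  · exact ⟨s', rfl⟩

theorem lyndonLeft_le_wordEval_drop (hs : IsBetaLyndon β s) (h : IsMultinacciOrder β m)
    (hi : i < s.length) : lyndonLeft β s ≤ wordEval β (s.drop i) 0 := by
  rcases Nat.eq_zero_or_pos i with rfl | hi0
  · exact (lyndonLeft_eq_wordEval β s).le
  · exact (lyndonLeft_le_lyndonRight h.one_lt hs.1).trans
      (hs.lyndonRight_le_wordEval_drop h hi0 hi le_rfl)

theorem admissible_append_zero (hs : IsBetaLyndon β (w ++ [1])) (h : IsMultinacciOrder β m)
    (hv : v < 1) (htv : t + (1 - v) ≤ lyndonLeft β (w ++ [1])) : Admissible β t (w ++ [0]) v := by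
  refine admissible_iff_forall_drop.2 fun i hi => ?_
  have hiw : i ≤ w.length := Nat.le_of_lt_succ (by simpa using hi)
  rw [List.drop_append_of_le_length hiw, wordEval_append_zero,
    ← List.drop_append_of_le_length hiw]
  constructor
  · have hgap := wordEval_sub β ((w ++ [1]).drop i) 0 (v - 1)
    have hgap_le := div_le_self (a := 0 - (v - 1)) (by linarith)
      (one_le_pow₀ h.one_lt.le (n := ((w ++ [1]).drop i).length))
    linarith [hs.lyndonLeft_le_wordEval_drop h (i := i) (by simpa using hi)]
  · exact (wordEval_strictMono h.pos _ ((sub_neg.2 hv).trans_le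
      (lyndonRight_nonneg h.one_lt.le _))).trans (hs.wordEval_drop_lt_one h i)

theorem exists_mem_Kset_lt_lyndonLeft (hs : IsBetaLyndon β s) (h : IsMultinacciOrder β m)
    (hR0 : 0 < lyndonRight β s) (hR : lyndonRight β s ≤ 1 - 1 / β) (ht : 0 ≤ t)
    (htL : t < lyndonLeft β s) : ∃ x ∈ Kset β t, x < lyndonLeft β s := by
  have hLR := lyndonLeft_le_lyndonRight h.one_lt hs.1
  obtain ⟨N, hN⟩ := exists_anchorParams h ht (sub_pos.2 htL)
    ((add_sub_cancel t _).trans_le (hLR.trans hR))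
  obtain ⟨v, hvK, hv⟩ := hN.exists_mem_Kset_near_one
    (Kset_antitone β (htL.le.trans hLR) (hs.lyndonRight_mem_Kset h))
    (hR.trans_lt h.one_sub_lt_one_div)
  obtain ⟨w, rfl⟩ := hs.exists_eq_append_one h hR0
  refine ⟨_, (hs.admissible_append_zero h hv.2 (by linarith [hv.1])).wordEval_mem_Kset h.pos.ne' ht
    hvK, ?_⟩
  rw [wordEval_append_zero, lyndonLeft_eq_wordEval]
  exact wordEval_strictMono h.pos _ (sub_neg.2 hv.2)

end IsBetaLyndon

end LyndonIntervals

section Plateau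

variable {β t : ℝ} {m : ℕ} {s : List ℕ}

namespace IsBetaLyndon

theorem lyndonLeft_pos (hs : IsBetaLyndon β s) (hβ : 1 < β) (hR : 0 < lyndonRight β s) :
    0 < lyndonLeft β s := by
  have hpow : 1 < β ^ s.length := one_lt_pow₀ hβ (List.length_pos_iff.2 hs.1).ne'
  exact (pos_iff_pos_of_mul_pos hR).1 (div_pos (one_pos.trans hpow) (sub_pos.2 hpow))

theorem Kset_eq_Kset_lyndonLeft (hs : IsBetaLyndon β s) (h : IsMultinacciOrder β m)
    (ht : t ∈ Icc (lyndonLeft β s) (lyndonRight β s)) : Kset β t = Kset β (lyndonLeft β s) :=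
  (Kset_antitone β ht.1).antisymm (hs.Kset_lyndonLeft h ▸ Kset_antitone β ht.2)

theorem dimH_Kset_lyndonLeft_lt (hs : IsBetaLyndon β s) (h : IsMultinacciOrder β m)
    (hR0 : 0 < lyndonRight β s) (hR : lyndonRight β s < 1 - 1 / β) (ht : t < lyndonLeft β s) :
    dimH (Kset β (lyndonLeft β s)) < dimH (Kset β t) := by
  obtain ⟨t₁, ht₁, ht₁L⟩ := exists_between (max_lt ht (hs.lyndonLeft_pos h.one_lt hR0))
  obtain ⟨t₂, ht₁₂, ht₂L⟩ := exists_between ht₁L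
  obtain ⟨htt₁, ht₁0⟩ := max_lt_iff.1 ht₁
  obtain ⟨x, hx, hxL⟩ :=
    hs.exists_mem_Kset_lt_lyndonLeft h hR0 hR.le (ht₁0.trans ht₁₂).le ht₂L
  have hLβ := (lyndonLeft_le_lyndonRight h.one_lt hs.1).trans_lt hR
  exact (dimH_Kset_lt_of_mem_Kset h ht₁0 (ht₁L.trans hLβ) ht₁₂ hx hxL
    (Kset_nonempty h (lyndonLeft_nonneg h.pos s) hLβ)).trans_le
    (dimH_mono (Kset_antitone β htt₁.le))

theorem dimH_Kset_lt_dimH_Kset_lyndonLeft (hs : IsBetaLyndon β s) (h : IsMultinacciOrder β m)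
    (hne : lyndonLeft β s < lyndonRight β s) (hR : lyndonRight β s < 1 - 1 / β)
    (ht : lyndonRight β s < t) : dimH (Kset β t) < dimH (Kset β (lyndonLeft β s)) := by
  obtain ⟨t', hRt', ht'⟩ := exists_between (lt_min ht hR)
  obtain ⟨ht't, ht'β⟩ := lt_min_iff.1 ht'
  have hR0 : 0 < lyndonRight β s := (lyndonLeft_nonneg h.pos s).trans_lt hne
  exact (dimH_mono (Kset_antitone β ht't.le)).trans_lt (dimH_Kset_lt_of_mem_Kset h
    (hs.lyndonLeft_pos h.one_lt hR0) (hne.trans hR) hne (hs.lyndonRight_mem_Kset h) hRt'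
    (Kset_nonempty h (hR0.trans hRt').le ht'β))

end IsBetaLyndon

end Plateau

theorem stmt_17_general {β t : ℝ} (hβ : 1 < β) (hmulti : IsMultinacci β) {s : List ℕ}
    (hs : IsBetaLyndon β s) (hne : lyndonLeft β s < lyndonRight β s)
    (hR : lyndonRight β s ≤ 1 - 1 / β) :
    dimH (Kset β t) = dimH (Kset β (lyndonLeft β s)) ↔
      t ∈ Icc (lyndonLeft β s) (lyndonRight β s) := by
  obtain ⟨m, h⟩ := hmulti.exists_order hβ
  have hR0 : 0 < lyndonRight β s := (lyndonLeft_nonneg h.pos s).trans_lt hne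
  have hR_lt := hR.lt_of_ne (hs.lyndonRight_ne_one_sub_one_div h hR0)
  refine ⟨fun heq => ⟨?_, ?_⟩, fun ht => congrArg dimH (hs.Kset_eq_Kset_lyndonLeft h ht)⟩
  · by_contra! hlt
    exact (hs.dimH_Kset_lyndonLeft_lt h hR0 hR_lt hlt).ne' heq
  · by_contra! hlt
    exact (hs.dimH_Kset_lt_dimH_Kset_lyndonLeft h hne hR_lt hlt).ne heq

/-- For a multinacci `β ∈ (1,2)` and a nonempty β-Lyndon interval
`[t_L, t_R) ⊆ [0, 1 - 1/β)`, the closed interval `[t_L, t_R]` is a maximal interval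
on which `η_β(t) = dim_H K_β(t)` is constant. -/
theorem stmt_17 (β : ℝ) (hβ : β ∈ Set.Ioo (1 : ℝ) 2) (hmulti : IsMultinacci β)
    (s : List ℕ) (hs : IsBetaLyndon β s)
    (hne : lyndonLeft β s < lyndonRight β s)
    (hsub : Set.Ico (lyndonLeft β s) (lyndonRight β s) ⊆ Set.Ico (0 : ℝ) (1 - 1 / β)) :
    (∀ t ∈ Set.Icc (lyndonLeft β s) (lyndonRight β s),
      dimH (Kset β t) = dimH (Kset β (lyndonLeft β s))) ∧
    ∀ I : Set ℝ, I.OrdConnected →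
      Set.Icc (lyndonLeft β s) (lyndonRight β s) ⊆ I →
      I ≠ Set.Icc (lyndonLeft β s) (lyndonRight β s) →
      ∃ x ∈ I, ∃ y ∈ I, dimH (Kset β x) ≠ dimH (Kset β y) := by
  have h (t : ℝ) := stmt_17_general (t := t) hβ.1 hmulti hs hne ((Ico_subset_Ico_iff hne).1 hsub).2
  refine ⟨fun t ht => (h t).2 ht, fun I _ hI hIne => ?_⟩
  obtain ⟨t, htI, ht⟩ := exists_of_ssubset (hI.ssubset_of_ne hIne.symm)
  exact ⟨t, htI, _, hI (left_mem_Icc.2 hne.le), mt (h t).1 ht⟩
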